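/- Let N ≥ 2, let B ⊂ ℝ^N be a bounded radial domain and I = closure{|x| : x ∈ B}. Suppose f : [0,∞) × I × ℝ → ℝ is continuous in (t,r), locally Lipschitz in u uniformly in (t,r), and periodic in t: there is T > 0 with f(t+T,r,u) = f(t,r,u) for all t,r,u. Let u ∈ C^{2,1}(B × (0,∞)) ∩ C(B̄ × [0,∞)) be a T-periodic classical solution of u_t = Δu + f(t,|x|,u) in B × (0,∞) with u = 0 on ∂B × (0,∞) (i.e., u(x,t+T) = u(x,t) for all x ∈ B, t ∈ [0,∞)) such that the initial profile u₀ = u(·,0) satisfies: there is e ∈ S with u₀(x) ≥ u₀(σ_e(x)) for all x ∈ B(e) and u₀ ∘ σ_e ≢ u₀ on B(e). Then there exists p ∈ S such that u(·,t) is foliated Schwarz symmetric with respect to p for every t ∈ [0,∞). -/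

import Mathlib

/-!
The proof is a rotating plane argument in the space of directions. For a vector `v` let `rf v` be the
reflection through the hyperplane orthogonal to `v`. The difference `w = u - u ∘ rf v` satisfies
`|∂ₜw - Δw| ≤ L * |w|`, because the Laplacian and `|x|` are invariant under reflections and `f` is
Lipschitz on the bounded range of `u`. A direction `v` is called *weak*, *strict* or *symmetric* when,
on the half domain on the side of `v` and for all times, `w ≥ 0`, `w > 0` or `w = 0`.

* The weak maximum principle (`Sol.nonneg_of_init`) and the strong one (`Sol.pos_of_nonneg`, where
  periodicity turns the loss of time in `Sol.spread` into positivity at all times) make the vector `e`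
  of the hypothesis strict, and show that a weak direction is strict or symmetric.
* A maximum principle in narrow domains (`Sol.nonneg_of_narrow`) shows that strictness is an open
  condition (`Sol.strict_eventually`). Weak directions form a closed set. Hence strictness propagates
  along any ray that meets no symmetric direction (`Sol.strict_ray`).
* The composition of the reflections in two symmetric directions `a`, `b` is a rotation of their plane.
  It excludes strict directions in the span of `a` and `b` (`Sol.not_strict_of_symm`). Consequently the
  symmetric directions form a linear subspace, and by propagation along rays from `e` this subspace is
  a hyperplane not containing `e`. Its unit normal `p` on the side of `e` is the required axis: every
  `v` with `⟪v, p⟫ ≥ 0` is weak (`Sol.exists_axis`). Applied to `v = x - y` with `|x| = |y|`, whose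
  reflection exchanges `x` and `y`, this is foliated Schwarz symmetry.

The maximum principles compare the time derivative and the Laplacian of `w` at a touching point with
those of explicit barriers.
-/

open Set Metric Filter
open scoped RealInnerProductSpace

noncomputable section

variable {N : ℕ}

/-- Reflection through the hyperplane `H(e) = {x : ⟪x,e⟫ = 0}`:
`σ_e(x) = x - 2 (x·e) e`. -/
def reflHyp (e x : EuclideanSpace ℝ (Fin N)) : EuclideanSpace ℝ (Fin N) :=
  x - (2 * ⟪x, e⟫) • e

/-- The half domain `B(e) = {x ∈ B : x·e > 0}`. -/
def halfDom (B : Set (EuclideanSpace ℝ (Fin N))) (e : EuclideanSpace ℝ (Fin N)) :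
    Set (EuclideanSpace ℝ (Fin N)) := {x ∈ B | 0 < ⟪x, e⟫}

/-- A (bounded) radial domain: an open ball or an open annulus centered at the origin. -/
def IsRadialDomain (B : Set (EuclideanSpace ℝ (Fin N))) : Prop :=
  (∃ R, 0 < R ∧ B = Metric.ball 0 R) ∨
  (∃ r R, 0 < r ∧ r < R ∧ B = {x : EuclideanSpace ℝ (Fin N) | r < ‖x‖ ∧ ‖x‖ < R})

/-- `u` is foliated Schwarz symmetric on `D` with respect to the unit vector `p`:
`u(x) ≥ u(y)` whenever `|x| = |y|` and `x·p ≥ y·p`.  (This is equivalent to axial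
symmetry with respect to `ℝp` together with monotonicity in the polar angle.) -/
def FoliatedSchwarzOn (D : Set (EuclideanSpace ℝ (Fin N)))
    (u : EuclideanSpace ℝ (Fin N) → ℝ) (p : EuclideanSpace ℝ (Fin N)) : Prop :=
  ∀ x ∈ D, ∀ y ∈ D, ‖x‖ = ‖y‖ → ⟪y, p⟫ ≤ ⟪x, p⟫ → u y ≤ u x

/-- The omega limit set of a (bounded) solution `u = u(x,t)`: all continuous
functions `z` on `B̄` which are uniform limits on `B̄` of `u(·, tₙ)` for some
sequence `tₙ → ∞`. -/
def omegaLimitSet (B : Set (EuclideanSpace ℝ (Fin N)))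
    (u : EuclideanSpace ℝ (Fin N) → ℝ → ℝ) : Set (EuclideanSpace ℝ (Fin N) → ℝ) :=
  {z | ContinuousOn z (closure B) ∧ ∃ t : ℕ → ℝ, Tendsto t atTop atTop ∧
    ∀ ε > 0, ∃ n₀ : ℕ, ∀ n ≥ n₀, ∀ x ∈ closure B, |u x (t n) - z x| ≤ ε}

section

open scoped Topology

/-! ### Second derivatives at touching points -/

/-- `SpaceData F x l` says that `F` has pure second derivatives at `x` along the coordinate axes,
whose sum, the Laplacian of `F` at `x`, equals `l`. Only the restrictions of `F` to the `N`
coordinate lines through `x` matter, which is all a maximum principle argument uses. -/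
structure SpaceData {N : ℕ} (F : EuclideanSpace ℝ (Fin N) → ℝ)
    (x : EuclideanSpace ℝ (Fin N)) (l : ℝ) : Prop where
  exists_second : ∃ (g : Fin N → ℝ → ℝ) (h : Fin N → ℝ),
    (∀ i, ∀ᶠ s in 𝓝 (0:ℝ),
      HasDerivAt (fun s => F (x + s • EuclideanSpace.single i (1:ℝ))) (g i s) s) ∧
    (∀ i, HasDerivAt (g i) (h i) 0) ∧ l = ∑ i, h i

/-- If the second derivative were negative, the minimum would also be a maximum, so `φ` would be
locally constant. -/
theorem second_nonneg_of_min {φ g : ℝ → ℝ} {h : ℝ}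
    (hφ : ∀ᶠ s in 𝓝 (0:ℝ), HasDerivAt φ (g s) s) (hg : HasDerivAt g h 0)
    (hmin : IsLocalMin φ 0) : 0 ≤ h := by
  by_contra hneg
  push Not at hneg
  have hd : deriv φ =ᶠ[𝓝 0] g := hφ.mono fun s hs => hs.deriv
  have h2 : deriv (deriv φ) 0 < 0 := by
    rw [hd.deriv_eq, hg.deriv]; exact hneg
  have h0 : deriv φ 0 = 0 := hmin.deriv_eq_zero
  have hmax : IsLocalMax φ 0 :=
    isLocalMax_of_deriv_deriv_neg h2 h0 hφ.self_of_nhds.continuousAt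
  have hconst : φ =ᶠ[𝓝 0] fun _ => φ 0 := by
    filter_upwards [hmin, hmax] with s h1 h3 using le_antisymm h3 h1
  have : deriv φ =ᶠ[𝓝 0] fun _ => 0 := by
    have := hconst.deriv
    simpa using this
  rw [this.deriv_eq] at h2
  simp at h2

/-- Comparison of Laplacians when `G` touches `F` from below at `x`. -/
theorem SpaceData.le_of_touch {N : ℕ} {F G : EuclideanSpace ℝ (Fin N) → ℝ}
    {x : EuclideanSpace ℝ (Fin N)} {l m : ℝ} (hF : SpaceData F x l) (hG : SpaceData G x m)
    (hle : ∀ᶠ y in 𝓝 x, G y ≤ F y) (heq : F x = G x) : m ≤ l := by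
  obtain ⟨g, h, h1, h2, rfl⟩ := hF
  obtain ⟨g', h', h1', h2', rfl⟩ := hG
  refine Finset.sum_le_sum fun i _ => ?_
  rw [← sub_nonneg]
  refine second_nonneg_of_min (φ := fun s => F (x + s • EuclideanSpace.single i (1:ℝ))
    - G (x + s • EuclideanSpace.single i (1:ℝ))) (g := fun s => g i s - g' i s) ?_
    ((h2 i).sub (h2' i)) ?_
  · filter_upwards [h1 i, h1' i] with s a b using a.sub b
  · have hc : Tendsto (fun s : ℝ => x + s • EuclideanSpace.single i (1:ℝ)) (𝓝 0) (𝓝 x) := by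
      have : Continuous (fun s : ℝ => x + s • EuclideanSpace.single i (1:ℝ)) := by fun_prop
      simpa using this.tendsto 0
    filter_upwards [hc.eventually hle] with s hs
    simp only [zero_smul, add_zero, heq, sub_self]
    linarith

/-- Comparison of time derivatives when `ψ` touches `φ` from below at `t`; only earlier times are
needed, so it applies at the final time of a parabolic cylinder. -/
theorem time_le_of_touch {φ ψ : ℝ → ℝ} {a b t : ℝ} (hφ : HasDerivAt φ a t)
    (hψ : HasDerivAt ψ b t) (hle : ∀ᶠ s in 𝓝[<] t, ψ s ≤ φ s) (heq : φ t = ψ t) : a ≤ b := by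
  have h := (hφ.sub hψ).tendsto_slope.mono_left
    (nhdsWithin_mono t (fun s (hs : s ∈ Iio t) => ne_of_lt hs))
  have : a - b ≤ 0 := by
    refine le_of_tendsto h ?_
    filter_upwards [hle, self_mem_nhdsWithin] with s h1 h2
    have h2 : s < t := h2
    rw [slope_def_field]
    apply div_nonpos_of_nonneg_of_nonpos
    · simp [heq]; exact h1
    · linarith
  linarith

/-- The Laplacian of `a0 + a1 * q + a2 * q ^ 2` with `q y = c0 + ⟪y, k⟫ + c * ‖y‖ ^ 2`. All barriers
below are locally of this form. -/
theorem spaceData_quad {N : ℕ} (a0 a1 a2 c0 c : ℝ) (k x : EuclideanSpace ℝ (Fin N)) :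
    SpaceData (fun y => a0 + a1 * (c0 + ⟪y, k⟫ + c * ‖y‖ ^ 2)
        + a2 * (c0 + ⟪y, k⟫ + c * ‖y‖ ^ 2) ^ 2) x
      ((a1 + 2 * a2 * (c0 + ⟪x, k⟫ + c * ‖x‖ ^ 2)) * (2 * c * N)
        + 2 * a2 * ‖k + (2 * c) • x‖ ^ 2) := by
  set q := c0 + ⟪x, k⟫ + c * ‖x‖ ^ 2 with hq
  have hline : ∀ (i : Fin N) (s : ℝ),
      c0 + ⟪x + s • EuclideanSpace.single i (1:ℝ), k⟫
        + c * ‖x + s • EuclideanSpace.single i (1:ℝ)‖ ^ 2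
      = q + s * (k i + 2 * c * x i) + c * s ^ 2 := by
    intro i s
    rw [norm_add_sq_real, inner_add_left, real_inner_smul_left, real_inner_smul_right,
      norm_smul, EuclideanSpace.inner_single_left, EuclideanSpace.inner_single_right, hq]
    simp
    ring
  refine ⟨fun i s => a1 * ((k i + 2 * c * x i) + c * (2 * s))
      + a2 * (2 * (q + s * (k i + 2 * c * x i) + c * s ^ 2)
        * ((k i + 2 * c * x i) + c * (2 * s))),
    fun i => (a1 + 2 * a2 * q) * (2 * c) + 2 * a2 * (k i + 2 * c * x i) ^ 2, ?_, ?_, ?_⟩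
  · intro i
    refine Eventually.of_forall fun s => ?_
    simp only [hline]
    have h1 : HasDerivAt (fun s : ℝ => q + s * (k i + 2 * c * x i) + c * s ^ 2)
        ((k i + 2 * c * x i) + c * (2 * s)) s := by
      have := (((hasDerivAt_id s).mul_const (k i + 2 * c * x i)).const_add q).add
        ((hasDerivAt_pow 2 s).const_mul c)
      exact this.congr_deriv (by simp)
    have := ((h1.const_mul a1).const_add a0).add ((h1.pow 2).const_mul a2)
    refine this.congr_deriv ?_
    simp
  · intro i
    have h1 : HasDerivAt (fun s : ℝ => q + s * (k i + 2 * c * x i) + c * s ^ 2)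
        (k i + 2 * c * x i) 0 := by
      have := (((hasDerivAt_id (0:ℝ)).mul_const (k i + 2 * c * x i)).const_add q).add
        ((hasDerivAt_pow 2 (0:ℝ)).const_mul c)
      exact this.congr_deriv (by simp)
    have h2 : HasDerivAt (fun s : ℝ => (k i + 2 * c * x i) + c * (2 * s)) (c * 2) 0 := by
      have := (((hasDerivAt_id (0:ℝ)).const_mul 2).const_mul c).const_add (k i + 2 * c * x i)
      simpa using this
    have := (h2.const_mul a1).add (((h1.const_mul 2).mul h2).const_mul a2)
    refine this.congr_deriv ?_
    simp
    ring
  · rw [EuclideanSpace.real_norm_sq_eq, Finset.sum_add_distrib, Finset.mul_sum]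
    simp only [Finset.sum_const, Finset.card_univ, Fintype.card_fin, nsmul_eq_mul,
      PiLp.add_apply, PiLp.smul_apply, smul_eq_mul]
    ring

/-! ### Reflections -/

/-- The reflection through the hyperplane orthogonal to `v`, for `v` of any length. Division by zero
makes `rf 0` the identity, so that `rf v` depends only on the line spanned by `v`. -/
def rf (v x : EuclideanSpace ℝ (Fin N)) : EuclideanSpace ℝ (Fin N) :=
  x - (2 * ⟪x, v⟫ / ‖v‖ ^ 2) • v

theorem rf_zero (x : EuclideanSpace ℝ (Fin N)) : rf 0 x = x := by simp [rf]

theorem rf_smul_left {c : ℝ} (hc : c ≠ 0) (v x : EuclideanSpace ℝ (Fin N)) :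
    rf (c • v) x = rf v x := by
  by_cases hv : v = 0
  · simp [hv]
  have hv' : ‖v‖ ≠ 0 := norm_ne_zero_iff.mpr hv
  simp only [rf, smul_smul, real_inner_smul_right, norm_smul, mul_pow, Real.norm_eq_abs, sq_abs]
  congr 2
  field_simp

theorem rf_smul_right (c : ℝ) (v x : EuclideanSpace ℝ (Fin N)) :
    rf v (c • x) = c • rf v x := by
  simp only [rf, real_inner_smul_left, smul_sub, smul_smul]
  congr 2
  ring

theorem inner_rf (v x : EuclideanSpace ℝ (Fin N)) : ⟪rf v x, v⟫ = - ⟪x, v⟫ := by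
  by_cases hv : v = 0
  · simp [hv]
  have hv' : ‖v‖ ≠ 0 := norm_ne_zero_iff.mpr hv
  simp only [rf, inner_sub_left, real_inner_smul_left, real_inner_self_eq_norm_sq]
  field_simp
  ring

theorem rf_rf (v x : EuclideanSpace ℝ (Fin N)) : rf v (rf v x) = x := by
  have h := inner_rf v x
  rw [rf, h, rf, sub_sub, ← add_smul]
  have : (2 * ⟪x, v⟫ / ‖v‖ ^ 2 + 2 * -⟪x, v⟫ / ‖v‖ ^ 2) = 0 := by ring
  rw [this, zero_smul, sub_zero]

theorem norm_rf (v x : EuclideanSpace ℝ (Fin N)) : ‖rf v x‖ = ‖x‖ := by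
  by_cases hv : v = 0
  · simp [hv, rf_zero]
  have hv' : ‖v‖ ≠ 0 := norm_ne_zero_iff.mpr hv
  have : ‖rf v x‖ ^ 2 = ‖x‖ ^ 2 := by
    rw [rf, norm_sub_sq_real, real_inner_smul_right, norm_smul, mul_pow, Real.norm_eq_abs, sq_abs]
    field_simp
    ring
  exact (pow_left_inj₀ (norm_nonneg _) (norm_nonneg _) two_ne_zero).mp this

theorem rf_of_inner_eq_zero {v x : EuclideanSpace ℝ (Fin N)} (h : ⟪x, v⟫ = 0) : rf v x = x := by
  simp [rf, h]

theorem rf_add (v x y : EuclideanSpace ℝ (Fin N)) : rf v (x + y) = rf v x + rf v y := by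
  simp only [rf, inner_add_left, mul_add, add_div, add_smul]
  abel

theorem continuous_rf (v : EuclideanSpace ℝ (Fin N)) : Continuous (rf v) := by
  unfold rf; fun_prop

theorem continuousAt_rf_uncurry {v x : EuclideanSpace ℝ (Fin N)} (hv : v ≠ 0) :
    ContinuousAt (fun p : EuclideanSpace ℝ (Fin N) × EuclideanSpace ℝ (Fin N) => rf p.1 p.2)
      (v, x) := by
  unfold rf
  have : ‖v‖ ^ 2 ≠ 0 := pow_ne_zero _ (norm_ne_zero_iff.mpr hv)
  fun_prop (disch := assumption)

/-- The Laplacian is invariant under reflections. -/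
theorem trace_rf (v : EuclideanSpace ℝ (Fin N))
    (H : EuclideanSpace ℝ (Fin N) →L[ℝ] EuclideanSpace ℝ (Fin N) →L[ℝ] ℝ) :
    ∑ i, H (rf v (EuclideanSpace.single i 1)) (rf v (EuclideanSpace.single i 1))
      = ∑ i, H (EuclideanSpace.single i 1) (EuclideanSpace.single i 1) := by
  by_cases hv : v = 0
  · simp [hv, rf_zero]
  have hv' : ‖v‖ ≠ 0 := norm_ne_zero_iff.mpr hv
  have hsum : v = ∑ i, v i • EuclideanSpace.single i (1:ℝ) := by
    simpa using ((EuclideanSpace.basisFun (Fin N) ℝ).sum_repr v).symm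
  have h1 : H v v = ∑ i, v i * H (EuclideanSpace.single i 1) v := by
    refine (congrArg (fun y => H y v) hsum).trans ?_
    simp [map_sum]
  have h2 : H v v = ∑ i, v i * H v (EuclideanSpace.single i 1) := by
    refine (congrArg (fun y => H v y) hsum).trans ?_
    simp [map_sum]
  set k := 2 / ‖v‖ ^ 2 with hk
  have hterm : ∀ i, H (rf v (EuclideanSpace.single i 1)) (rf v (EuclideanSpace.single i 1))
      = H (EuclideanSpace.single i 1) (EuclideanSpace.single i 1)
        - k * (v i * H (EuclideanSpace.single i 1) v) - k * (v i * H v (EuclideanSpace.single i 1))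
        + k ^ 2 * H v v * (v i) ^ 2 := by
    intro i
    have : rf v (EuclideanSpace.single i 1) = EuclideanSpace.single i 1 - (k * v i) • v := by
      rw [rf, EuclideanSpace.inner_single_left, hk]
      congr 2
      simp
      ring
    rw [this]
    simp only [map_sub, map_smul, sub_apply, smul_apply,
      smul_eq_mul]
    ring
  simp only [hterm, Finset.sum_add_distrib, Finset.sum_sub_distrib, ← Finset.mul_sum]
  rw [← h1, ← h2, ← EuclideanSpace.real_norm_sq_eq, hk]
  field_simp
  ring

/-- The Laplacian of the difference between a function and its reflection, computed from Fréchet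
derivatives. -/
theorem spaceData_sub_rf {F : EuclideanSpace ℝ (Fin N) → ℝ}
    {D : EuclideanSpace ℝ (Fin N) → (EuclideanSpace ℝ (Fin N) →L[ℝ] ℝ)}
    {H : EuclideanSpace ℝ (Fin N) →
      (EuclideanSpace ℝ (Fin N) →L[ℝ] EuclideanSpace ℝ (Fin N) →L[ℝ] ℝ)}
    {B : Set (EuclideanSpace ℝ (Fin N))} (hB : IsOpen B)
    (hD : ∀ y ∈ B, HasFDerivAt F (D y) y) (hH : ∀ y ∈ B, HasFDerivAt D (H y) y)
    (v x : EuclideanSpace ℝ (Fin N)) (hx : x ∈ B) (hx' : rf v x ∈ B) :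
    SpaceData (fun y => F y - F (rf v y)) x
      ((∑ i, H x (EuclideanSpace.single i 1) (EuclideanSpace.single i 1))
        - ∑ i, H (rf v x) (EuclideanSpace.single i 1) (EuclideanSpace.single i 1)) := by
  have key : ∀ (y w : EuclideanSpace ℝ (Fin N)), y ∈ B →
      (∀ᶠ s in 𝓝 (0:ℝ), HasDerivAt (fun s : ℝ => F (y + s • w)) (D (y + s • w) w) s) ∧
      HasDerivAt (fun s : ℝ => D (y + s • w) w) (H y w w) 0 := by
    intro y w hy
    have hl : ∀ s : ℝ, HasDerivAt (fun s : ℝ => y + s • w) w s := by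
      intro s
      simpa using ((hasDerivAt_id s).smul_const w).const_add y
    have hc : Tendsto (fun s : ℝ => y + s • w) (𝓝 0) (𝓝 y) := by
      simpa using (hl 0).continuousAt.tendsto
    constructor
    · filter_upwards [hc.eventually (hB.mem_nhds hy)] with s hs
      exact (hD _ hs).comp_hasDerivAt s (hl s)
    · have h0 : y + (0:ℝ) • w = y := by simp
      have := (h0.symm ▸ hH y hy : HasFDerivAt D (H y) (y + (0:ℝ) • w)).comp_hasDerivAt (0:ℝ) (hl 0)
      exact this.clm_apply (hasDerivAt_const _ _) |>.congr_deriv (by simp)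
  rw [← trace_rf v (H (rf v x)), ← Finset.sum_sub_distrib]
  refine ⟨fun i s => D (x + s • EuclideanSpace.single i 1) (EuclideanSpace.single i 1)
      - D (rf v x + s • rf v (EuclideanSpace.single i 1)) (rf v (EuclideanSpace.single i 1)),
    _, fun i => ?_, fun i => ?_, rfl⟩
  · filter_upwards [(key x (EuclideanSpace.single i 1) hx).1,
      (key (rf v x) (rf v (EuclideanSpace.single i 1)) hx').1] with s h1 h2
    simp only [rf_add, rf_smul_right]
    exact h1.sub h2
  · exact (key x (EuclideanSpace.single i 1) hx).2.sub
      (key (rf v x) (rf v (EuclideanSpace.single i 1)) hx').2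

/-! ### Weak maximum principle and spreading of positivity -/

/-- The open radial domain `ρ < ‖x‖² < τ`: an annulus for `0 < ρ`, a ball for `ρ < 0`. -/
def Bd (ρ τ : ℝ) : Set (EuclideanSpace ℝ (Fin N)) := {x | ρ < ‖x‖ ^ 2 ∧ ‖x‖ ^ 2 < τ}

/-- The closed counterpart `ρ ≤ ‖x‖² ≤ τ` of `Bd ρ τ`. -/
def Cl (ρ τ : ℝ) : Set (EuclideanSpace ℝ (Fin N)) := {x | ρ ≤ ‖x‖ ^ 2 ∧ ‖x‖ ^ 2 ≤ τ}

/-- The difference between `u` and its reflection through the hyperplane orthogonal to `v`. -/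
def dif (u : EuclideanSpace ℝ (Fin N) → ℝ → ℝ) (v x : EuclideanSpace ℝ (Fin N)) (t : ℝ) : ℝ :=
  u x t - u (rf v x) t

/-- The part of the hypotheses on `u` that the symmetry argument uses: periodicity, the boundary
condition, and, in `eqn`, the linear inequality `|∂ₜw - Δw| ≤ L * |w|` for every difference
`w = dif u v`, which follows from the equation and the Lipschitz bound on the nonlinearity.
A ball is encoded by `ρ = -1`. -/
structure Sol (ρ τ T L : ℝ) (u : EuclideanSpace ℝ (Fin N) → ℝ → ℝ) : Prop where
  lt : ρ < τ
  pos : 0 < τ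
  inner_radius : 0 < ρ ∨ ρ = -1
  T_pos : 0 < T
  L_pos : 0 < L
  cont : ContinuousOn (fun p : EuclideanSpace ℝ (Fin N) × ℝ => u p.1 p.2) (Cl ρ τ ×ˢ Ici 0)
  per : ∀ x ∈ Cl ρ τ, ∀ t, 0 ≤ t → u x (t + T) = u x t
  bdry : ∀ x ∈ Cl ρ τ, x ∉ Bd ρ τ → ∀ t, 0 ≤ t → u x t = 0
  eqn : ∀ v, ∀ x ∈ Bd ρ τ, ∀ t, 0 < t → ∃ a l, HasDerivAt (fun s => dif u v x s) a t ∧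
    SpaceData (fun y => dif u v y t) x l ∧ |a - l| ≤ L * |dif u v x t|

variable {ρ τ T L : ℝ} {u : EuclideanSpace ℝ (Fin N) → ℝ → ℝ}

theorem Bd_subset_Cl : (Bd ρ τ : Set (EuclideanSpace ℝ (Fin N))) ⊆ Cl ρ τ :=
  fun _ hx => ⟨hx.1.le, hx.2.le⟩

theorem isOpen_Bd : IsOpen (Bd ρ τ : Set (EuclideanSpace ℝ (Fin N))) := by
  have h1 : IsOpen {x : EuclideanSpace ℝ (Fin N) | ρ < ‖x‖ ^ 2} :=
    isOpen_lt (by fun_prop) (by fun_prop)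
  have h2 : IsOpen {x : EuclideanSpace ℝ (Fin N) | ‖x‖ ^ 2 < τ} :=
    isOpen_lt (by fun_prop) (by fun_prop)
  exact h1.inter h2

theorem isClosed_Cl : IsClosed (Cl ρ τ : Set (EuclideanSpace ℝ (Fin N))) := by
  have h1 : IsClosed {x : EuclideanSpace ℝ (Fin N) | ρ ≤ ‖x‖ ^ 2} :=
    isClosed_le (by fun_prop) (by fun_prop)
  have h2 : IsClosed {x : EuclideanSpace ℝ (Fin N) | ‖x‖ ^ 2 ≤ τ} :=
    isClosed_le (by fun_prop) (by fun_prop)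
  exact h1.inter h2

theorem isCompact_Cl : IsCompact (Cl ρ τ : Set (EuclideanSpace ℝ (Fin N))) := by
  refine (isCompact_closedBall (0 : EuclideanSpace ℝ (Fin N)) (Real.sqrt τ)).of_isClosed_subset
    isClosed_Cl fun x hx => ?_
  rw [mem_closedBall_zero_iff]
  exact Real.le_sqrt_of_sq_le hx.2

theorem rf_mem_Bd {v x : EuclideanSpace ℝ (Fin N)} : rf v x ∈ Bd ρ τ ↔ x ∈ Bd ρ τ := by
  simp [Bd, norm_rf]

theorem rf_mem_Cl {v x : EuclideanSpace ℝ (Fin N)} : rf v x ∈ Cl ρ τ ↔ x ∈ Cl ρ τ := by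
  simp [Cl, norm_rf]

theorem isOpen_half (v : EuclideanSpace ℝ (Fin N)) : IsOpen (halfDom (Bd ρ τ) v) := by
  have h1 : IsOpen {x : EuclideanSpace ℝ (Fin N) | 0 < ⟪x, v⟫} :=
    isOpen_lt (by fun_prop) (by fun_prop)
  exact isOpen_Bd.inter h1

theorem isCompact_closedHalf (v : EuclideanSpace ℝ (Fin N)) :
    IsCompact {x : EuclideanSpace ℝ (Fin N) | x ∈ Cl ρ τ ∧ 0 ≤ ⟪x, v⟫} := by
  have h1 : IsClosed {x : EuclideanSpace ℝ (Fin N) | 0 ≤ ⟪x, v⟫} :=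
    isClosed_le (by fun_prop) (by fun_prop)
  exact isCompact_Cl.inter_right h1

theorem dif_eq_zero_of_inner {v x : EuclideanSpace ℝ (Fin N)} (h : ⟪x, v⟫ = 0) (t : ℝ) :
    dif u v x t = 0 := by
  rw [dif, rf_of_inner_eq_zero h, sub_self]

theorem dif_rf (v x : EuclideanSpace ℝ (Fin N)) (t : ℝ) : dif u v (rf v x) t = - dif u v x t := by
  simp [dif, rf_rf]

namespace Sol

theorem cont_dif (h : Sol ρ τ T L u) (v : EuclideanSpace ℝ (Fin N)) :
    ContinuousOn (fun p : EuclideanSpace ℝ (Fin N) × ℝ => dif u v p.1 p.2) (Cl ρ τ ×ˢ Ici 0) := by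
  refine h.cont.sub ?_
  exact h.cont.comp (f := fun p : EuclideanSpace ℝ (Fin N) × ℝ => (rf v p.1, p.2))
    ((((continuous_rf v).comp continuous_fst).prodMk continuous_snd).continuousOn)
    fun p hp => ⟨rf_mem_Cl.mpr hp.1, hp.2⟩

theorem mem_half (h : Sol ρ τ T L u) {v x : EuclideanSpace ℝ (Fin N)} {t : ℝ}
    (hx : x ∈ Cl ρ τ) (hxv : 0 ≤ ⟪x, v⟫) (ht : 0 ≤ t) (hne : dif u v x t ≠ 0) :
    x ∈ halfDom (Bd ρ τ) v := by
  refine ⟨?_, lt_of_le_of_ne hxv fun h0 => hne (dif_eq_zero_of_inner h0.symm t)⟩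
  by_contra hB
  apply hne
  rw [dif, h.bdry x hx hB t ht, h.bdry _ (rf_mem_Cl.mpr hx) (fun hh => hB (rf_mem_Bd.mp hh)) t ht,
    sub_zero]

/-- Weak maximum principle: a negative minimum of `exp (-(L + 1) * t) * dif u v x t` over the closed
half domain contradicts the linear inequality. -/
theorem nonneg_of_init (h : Sol ρ τ T L u) {v : EuclideanSpace ℝ (Fin N)}
    (h0 : ∀ x ∈ halfDom (Bd ρ τ) v, 0 ≤ dif u v x 0) :
    ∀ t, 0 ≤ t → ∀ x ∈ halfDom (Bd ρ τ) v, 0 ≤ dif u v x t := by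
  intro t₁ ht₁ x₁ hx₁
  by_contra hneg
  push Not at hneg
  have hK := (isCompact_closedHalf (ρ := ρ) (τ := τ) v).prod (isCompact_Icc (a := (0:ℝ)) (b := t₁))
  have hG : ContinuousOn (fun p : EuclideanSpace ℝ (Fin N) × ℝ =>
      Real.exp (-(L + 1) * p.2) * dif u v p.1 p.2)
      ({x : EuclideanSpace ℝ (Fin N) | x ∈ Cl ρ τ ∧ 0 ≤ ⟪x, v⟫} ×ˢ Icc 0 t₁) := by
    refine ContinuousOn.mul (by fun_prop) ((h.cont_dif v).mono ?_)
    exact prod_mono (fun x hx => hx.1) (fun s hs => hs.1)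
  have hmem : (x₁, t₁) ∈ {x : EuclideanSpace ℝ (Fin N) | x ∈ Cl ρ τ ∧ 0 ≤ ⟪x, v⟫} ×ˢ Icc 0 t₁ :=
    ⟨⟨Bd_subset_Cl hx₁.1, hx₁.2.le⟩, ⟨ht₁, le_rfl⟩⟩
  obtain ⟨⟨x, t⟩, ⟨hxQ, ht⟩, hmin⟩ := hK.exists_isMinOn ⟨_, hmem⟩ hG
  have hmin' : ∀ y s, y ∈ Cl ρ τ → 0 ≤ ⟪y, v⟫ → 0 ≤ s → s ≤ t₁ →
      Real.exp (-(L + 1) * t) * dif u v x t ≤ Real.exp (-(L + 1) * s) * dif u v y s :=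
    fun y s h1 h2 h3 h4 => hmin (show (y, s) ∈ _ from ⟨⟨h1, h2⟩, ⟨h3, h4⟩⟩)
  set m := Real.exp (-(L + 1) * t) * dif u v x t with hm
  have hm0 : m < 0 := lt_of_le_of_lt (hmin' x₁ t₁ hmem.1.1 hmem.1.2 ht₁ le_rfl)
    (mul_neg_of_pos_of_neg (Real.exp_pos _) hneg)
  have hw : dif u v x t = m * Real.exp ((L + 1) * t) := by
    rw [hm, mul_right_comm, ← Real.exp_add, neg_mul, neg_add_cancel, Real.exp_zero, one_mul]
  have hwneg : dif u v x t < 0 := by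
    rw [hw]; exact mul_neg_of_neg_of_pos hm0 (Real.exp_pos _)
  have hlow : ∀ y s, y ∈ Cl ρ τ → 0 ≤ ⟪y, v⟫ → 0 ≤ s → s ≤ t₁ →
      m * Real.exp ((L + 1) * s) ≤ dif u v y s := by
    intro y s h1 h2 h3 h4
    have := mul_le_mul_of_nonneg_right (hmin' y s h1 h2 h3 h4) (Real.exp_pos ((L + 1) * s)).le
    rwa [mul_right_comm (Real.exp (-(L + 1) * s)), ← Real.exp_add, neg_mul (L + 1) s,
      neg_add_cancel, Real.exp_zero, one_mul] at this
  have hxh := h.mem_half hxQ.1 hxQ.2 ht.1 hwneg.ne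
  have htpos : 0 < t := by
    refine lt_of_le_of_ne ht.1 fun h00 => ?_
    rw [← h00] at hwneg
    exact absurd (h0 x hxh) (not_le.mpr hwneg)
  obtain ⟨a, l, ha, hl, hal⟩ := h.eqn v x hxh.1 t htpos
  have ha' : a ≤ m * ((L + 1) * Real.exp ((L + 1) * t)) := by
    refine time_le_of_touch ha (ψ := fun s => m * Real.exp ((L + 1) * s)) ?_ ?_ hw
    · have := ((((hasDerivAt_id t).const_mul (L + 1)).exp).const_mul m)
      refine this.congr_deriv ?_
      simp only [id_eq]
      ring
    · filter_upwards [Ioo_mem_nhdsLT htpos] with s hs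
      exact hlow x s hxQ.1 hxQ.2 hs.1.le (hs.2.le.trans ht.2)
  have hl' : 0 ≤ l := by
    have hs := spaceData_quad (m * Real.exp ((L + 1) * t)) 0 0 0 0 0 x
    have := hl.le_of_touch hs ?_ ?_
    · simpa using this
    · filter_upwards [(isOpen_half v).mem_nhds hxh] with y hy
      simpa using hlow y t (Bd_subset_Cl hy.1) hy.2.le ht.1 ht.2
    · simpa using hw
  have hE : m * ((L + 1) * Real.exp ((L + 1) * t)) = (L + 1) * dif u v x t := by rw [hw]; ring
  rw [abs_of_neg hwneg] at hal
  have := (abs_le.mp hal).1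
  nlinarith

/-- The algebra behind the barrier in `Sol.spread`, obtained by completing the square. -/
theorem barrier_pos {N : ℕ} {δ κ L G K : ℝ} (hδ : 0 < δ) (hK : 0 ≤ K) :
    0 < 8 * (δ ^ 2 + K - G) - 4 * N * G - L * G ^ 2 - 2 * G * κ
      + (L + (2 * κ + 8 + 4 * (N : ℝ)) ^ 2 / (16 * δ ^ 2)) * G ^ 2 := by
  have h1 : 8 * (δ ^ 2 + K - G) - 4 * N * G - L * G ^ 2 - 2 * G * κ
      + (L + (2 * κ + 8 + 4 * (N : ℝ)) ^ 2 / (16 * δ ^ 2)) * G ^ 2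
      = 4 * δ ^ 2 + 8 * K + (2 * δ - (2 * κ + 8 + 4 * (N : ℝ)) * G / (4 * δ)) ^ 2 := by
    field_simp
    ring
  rw [h1]
  positivity

theorem hasDerivAt_barrier {g e : ℝ → ℝ} {κ e' t : ℝ} (m ε : ℝ) (hg : HasDerivAt g κ t)
    (he : HasDerivAt e e' t) :
    HasDerivAt (fun s => m + ε * (e s * g s ^ 2))
      (ε * (e' * g t ^ 2 + e t * (2 * g t * κ))) t := by
  refine (((he.mul (hg.pow 2)).const_mul ε).const_add m).congr_deriv ?_
  simp

/-- Positivity at the centre `y` of a ball in the half domain reaches every point `z` of the open ball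
at any later time `t₁`. The barrier is `ε * exp (-lam * (t - s)) * (max g 0) ^ 2` with
`g x t = δ ^ 2 + κ * (t - s) - ‖x - y‖ ^ 2`; its support grows from the ball of radius `δ` at time `s`
to the ball of radius `r` at time `t₁`, and it is a strict subsolution where `g` is positive. -/
theorem spread (h : Sol ρ τ T L u) {v : EuclideanSpace ℝ (Fin N)}
    (hM : ∀ t, 0 ≤ t → ∀ x ∈ halfDom (Bd ρ τ) v, 0 ≤ dif u v x t)
    {y z : EuclideanSpace ℝ (Fin N)} {r s t₁ : ℝ} (hr : closedBall y r ⊆ halfDom (Bd ρ τ) v)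
    (hs : 0 ≤ s) (hst : s < t₁) (hz : z ∈ ball y r) (hpos : 0 < dif u v y s) :
    0 < dif u v z t₁ := by
  have hr0 : 0 < r := pos_of_mem_ball hz
  have hsub : closedBall y r ×ˢ Icc s t₁ ⊆ Cl ρ τ ×ˢ Ici 0 :=
    prod_mono (fun x hx => Bd_subset_Cl (hr hx).1) (fun t ht => hs.trans ht.1)
  -- `δ` is the radius of a ball on which `dif u v · s` stays above half of its value at `y`
  obtain ⟨δ, hδ0, hδr, hδ⟩ : ∃ δ > 0, δ < r ∧ ∀ x, ‖x - y‖ < δ → dif u v y s / 2 ≤ dif u v x s := by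
    have hc : ContinuousAt (fun x => dif u v x s) y := by
      have : ContinuousOn (fun x => dif u v x s) (closedBall y r) :=
        (h.cont_dif v).comp (f := fun x => (x, s)) (by fun_prop)
          fun x hx => hsub ⟨hx, ⟨le_rfl, hst.le⟩⟩
      exact this.continuousAt (closedBall_mem_nhds y hr0)
    have hev := hc.eventually (lt_mem_nhds (half_lt_self hpos))
    obtain ⟨δ, hδ, hb⟩ := Metric.eventually_nhds_iff.mp hev
    refine ⟨min δ (r / 2), by positivity, (min_le_right _ _).trans_lt (by linarith), fun x hx => ?_⟩
    refine (hb ?_).le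
    rw [dist_eq_norm]
    exact hx.trans_le (min_le_left _ _)
  set c := dif u v y s / 2 with hc
  have hc0 : 0 < c := by positivity
  set ε := c / δ ^ 4 with hε
  have hε0 : 0 < ε := by positivity
  have hεδ : ε * δ ^ 4 = c := by rw [hε]; field_simp
  set κ := (r ^ 2 - δ ^ 2) / (t₁ - s) with hκ
  have hts : 0 < t₁ - s := by linarith
  have hκ0 : 0 ≤ κ := div_nonneg (by nlinarith) hts.le
  have hκr : κ * (t₁ - s) = r ^ 2 - δ ^ 2 := by rw [hκ]; field_simp
  set A := 2 * κ + 8 + 4 * (N : ℝ) with hA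
  set lam := L + A ^ 2 / (16 * δ ^ 2) with hlam
  let g : EuclideanSpace ℝ (Fin N) → ℝ → ℝ := fun x t => δ ^ 2 + κ * (t - s) - ‖x - y‖ ^ 2
  have hgc : Continuous fun p : EuclideanSpace ℝ (Fin N) × ℝ => g p.1 p.2 := by
    simp only [g]; fun_prop
  let ψ : EuclideanSpace ℝ (Fin N) → ℝ → ℝ :=
    fun x t => Real.exp (-lam * (t - s)) * (max (g x t) 0) ^ 2
  have hψc : Continuous fun p : EuclideanSpace ℝ (Fin N) × ℝ => ψ p.1 p.2 := by
    simp only [ψ]; fun_prop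
  have hF : ContinuousOn (fun p : EuclideanSpace ℝ (Fin N) × ℝ => dif u v p.1 p.2 - ε * ψ p.1 p.2)
      (closedBall y r ×ˢ Icc s t₁) :=
    ((h.cont_dif v).mono hsub).sub (hψc.continuousOn.const_smul ε)
  have hzmem : (z, t₁) ∈ closedBall y r ×ˢ Icc s t₁ := ⟨ball_subset_closedBall hz, ⟨hst.le, le_rfl⟩⟩
  obtain ⟨⟨x, t⟩, ⟨hx, ht⟩, hmin⟩ :=
    ((isCompact_closedBall y r).prod (isCompact_Icc (a := s) (b := t₁))).exists_isMinOn ⟨_, hzmem⟩ hF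
  have hx : x ∈ closedBall y r := hx
  have ht : t ∈ Icc s t₁ := ht
  have hmin' : ∀ x' t', x' ∈ closedBall y r → t' ∈ Icc s t₁ →
      dif u v x t - ε * ψ x t ≤ dif u v x' t' - ε * ψ x' t' :=
    fun x' t' h1 h2 => hmin (show (x', t') ∈ _ from ⟨h1, h2⟩)
  set m := dif u v x t - ε * ψ x t with hm
  by_cases hm0 : 0 ≤ m
  · have h1 := hm0.trans (hmin' z t₁ hzmem.1 hzmem.2)
    have h2 : 0 < ψ z t₁ := by
      have hgz : 0 < g z t₁ := by
        simp only [g]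
        rw [hκr]
        have : ‖z - y‖ < r := by rw [← dist_eq_norm]; exact hz
        nlinarith [norm_nonneg (z - y)]
      have : 0 < max (g z t₁) 0 := lt_max_of_lt_left hgz
      simp only [ψ]
      positivity
    nlinarith
  exfalso
  push Not at hm0
  have hxh := hr hx
  have hw0 : 0 ≤ dif u v x t := hM t (hs.trans ht.1) x hxh
  have hψpos : 0 < ψ x t := by
    by_contra hcon
    push Not at hcon
    nlinarith
  have hg : 0 < g x t := by
    by_contra hcon
    push Not at hcon
    simp [ψ, max_eq_right hcon] at hψpos
  have hψg : ψ x t = Real.exp (-lam * (t - s)) * (g x t) ^ 2 := by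
    simp only [ψ]; rw [max_eq_left hg.le]
  have htlt : s < t := by
    refine lt_of_le_of_ne ht.1 fun hEq => ?_
    have hg' : ‖x - y‖ ^ 2 < δ ^ 2 := by
      have := hg
      simp only [g, ← hEq] at this
      linarith
    have hxd : ‖x - y‖ < δ := lt_of_pow_lt_pow_left₀ 2 hδ0.le hg'
    have hwc := hδ x hxd
    have hψle : ψ x t ≤ δ ^ 4 := by
      rw [hψg, ← hEq]
      simp only [g, sub_self, mul_zero, Real.exp_zero, one_mul, add_zero]
      nlinarith [sq_nonneg ‖x - y‖, sq_nonneg δ]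
    rw [← hEq] at hm hψle
    nlinarith
  have hxb : x ∈ ball y r := by
    rw [mem_ball, dist_eq_norm]
    refine lt_of_pow_lt_pow_left₀ 2 hr0.le ?_
    have h1 : κ * (t - s) ≤ κ * (t₁ - s) := mul_le_mul_of_nonneg_left (by linarith [ht.2]) hκ0
    have := hg
    simp only [g] at this
    linarith
  obtain ⟨a, l, ha, hl, hal⟩ := h.eqn v x hxh.1 t (hs.trans_lt htlt)
  set E := Real.exp (-lam * (t - s)) with hE
  have hE0 : 0 < E := Real.exp_pos _
  have hwm : dif u v x t = m + ε * E * (g x t) ^ 2 := by rw [hm, hψg]; ring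
  have ha' : a ≤ ε * (E * (2 * g x t * κ) - lam * E * (g x t) ^ 2) := by
    refine time_le_of_touch ha
      (ψ := fun t' => m + ε * (Real.exp (-lam * (t' - s)) * (g x t') ^ 2)) ?_ ?_ ?_
    · have h1 : HasDerivAt (fun t' => g x t') κ t := by
        have := ((((hasDerivAt_id t).sub_const s).const_mul κ).const_add (δ ^ 2)).sub_const
          (‖x - y‖ ^ 2)
        exact this.congr_deriv (by simp)
      have h2 : HasDerivAt (fun t' => Real.exp (-lam * (t' - s))) (E * (-lam)) t := by
        have := (((hasDerivAt_id t).sub_const s).const_mul (-lam)).exp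
        exact this.congr_deriv (by simp [hE])
      refine (hasDerivAt_barrier m ε h1 h2).congr_deriv ?_
      rw [hE]
      ring
    · have hgt : ∀ᶠ t' in 𝓝[<] t, 0 < g x t' := by
        have : Continuous fun t' => g x t' := by simp only [g]; fun_prop
        exact (this.continuousAt.eventually (lt_mem_nhds hg)).filter_mono nhdsWithin_le_nhds
      filter_upwards [hgt, Ioo_mem_nhdsLT htlt] with t' h1 h2
      have := hmin' x t' hx ⟨h2.1.le, h2.2.le.trans ht.2⟩
      simp only [ψ, max_eq_left h1.le] at this
      linarith
    · rw [hwm]; ring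
  have hl' : 2 * (ε * E) * g x t * (-2 * N) + 2 * (ε * E) * (4 * ‖x - y‖ ^ 2) ≤ l := by
    have hq : ∀ x', δ ^ 2 + κ * (t - s) - ‖y‖ ^ 2 + ⟪x', (2:ℝ) • y⟫ + (-1) * ‖x'‖ ^ 2 = g x' t := by
      intro x'
      simp only [g]
      rw [norm_sub_sq_real, real_inner_smul_right]
      ring
    have hsd := spaceData_quad m 0 (ε * E) (δ ^ 2 + κ * (t - s) - ‖y‖ ^ 2) (-1) ((2:ℝ) • y) x
    simp only [hq] at hsd
    have hn : ‖(2:ℝ) • y + (2 * (-1 : ℝ)) • x‖ ^ 2 = 4 * ‖x - y‖ ^ 2 := by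
      have : (2:ℝ) • y + (2 * (-1 : ℝ)) • x = (-2 : ℝ) • (x - y) := by module
      rw [this, norm_smul, mul_pow]
      norm_num
    rw [hn] at hsd
    have := hl.le_of_touch hsd ?_ ?_
    · linarith
    · have hgt : ∀ᶠ x' in 𝓝 x, 0 < g x' t := by
        have : Continuous fun x' => g x' t := by simp only [g]; fun_prop
        exact this.continuousAt.eventually (lt_mem_nhds hg)
      filter_upwards [hgt, isOpen_ball.mem_nhds hxb] with x' h1 h2
      have := hmin' x' t (ball_subset_closedBall h2) ht
      simp only [ψ, max_eq_left h1.le] at this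
      linarith
    · rw [hwm]; ring
  rw [abs_of_nonneg hw0] at hal
  have hal := (abs_le.mp hal).1
  have hLw : L * dif u v x t ≤ L * (ε * E * (g x t) ^ 2) :=
    mul_le_mul_of_nonneg_left (by linarith) h.L_pos.le
  set G := g x t with hG
  have hxy : ‖x - y‖ ^ 2 = δ ^ 2 + κ * (t - s) - G := by simp only [hG, g]; ring
  have hκt : 0 ≤ κ * (t - s) := mul_nonneg hκ0 (by linarith)
  have hεE : 0 < ε * E := mul_pos hε0 hE0
  have hfin : (ε * E) * (8 * ‖x - y‖ ^ 2 - 4 * N * G - L * G ^ 2 - 2 * G * κ + lam * G ^ 2) ≤ 0 := by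
    linarith
  have hfin' : 8 * ‖x - y‖ ^ 2 - 4 * N * G - L * G ^ 2 - 2 * G * κ + lam * G ^ 2 ≤ 0 := by
    by_contra hcon
    push Not at hcon
    exact absurd hfin (not_le.mpr (mul_pos hεE hcon))
  have := barrier_pos (N := N) (δ := δ) (κ := κ) (L := L) (G := G) hδ0 hκt
  rw [← hA, ← hlam, ← hxy] at this
  linarith

end Sol

/-! ### Strong maximum principle and narrow domains -/

/-- In polar coordinates the half domain is the image of a product of convex sets. -/
theorem isPreconnected_half (v : EuclideanSpace ℝ (Fin N)) :
    IsPreconnected (halfDom (Bd ρ τ) v) := by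
  have h1 : Convex ℝ {x : EuclideanSpace ℝ (Fin N) | 0 < ⟪x, v⟫} := by
    intro x hx y hy a b ha hb hab
    simp only [mem_ofPred_eq, inner_add_left, real_inner_smul_left] at *
    rcases ha.eq_or_lt with rfl | ha'
    · have : b = 1 := by linarith
      subst this; simpa using hy
    · have := mul_pos ha' hx
      have := mul_nonneg hb hy.le
      linarith
  have h2 : OrdConnected {s : ℝ | 0 < s ∧ ρ < s ^ 2 ∧ s ^ 2 < τ} := by
    refine ⟨fun a ha b hb c hc => ⟨ha.1.trans_le hc.1, ?_, ?_⟩⟩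
    · exact ha.2.1.trans_le (pow_le_pow_left₀ ha.1.le hc.1 2)
    · exact (pow_le_pow_left₀ (ha.1.le.trans hc.1) hc.2 2).trans_lt hb.2.2
  have h3 := (h1.isPreconnected.prod h2.isPreconnected).image
    (fun p : EuclideanSpace ℝ (Fin N) × ℝ => (p.2 / ‖p.1‖) • p.1) (by
      have hfst : ContinuousOn (fun p : EuclideanSpace ℝ (Fin N) × ℝ => ‖p.1‖)
          ({x : EuclideanSpace ℝ (Fin N) | 0 < ⟪x, v⟫} ×ˢ {s : ℝ | 0 < s ∧ ρ < s ^ 2 ∧ s ^ 2 < τ}) :=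
        (continuous_norm.comp continuous_fst).continuousOn
      refine ContinuousOn.smul (continuous_snd.continuousOn.div hfst ?_) continuous_fst.continuousOn
      rintro ⟨x, s⟩ hx h0
      have hx : 0 < ⟪x, v⟫ := hx.1
      have : x = 0 := norm_eq_zero.mp h0
      simp [this] at hx)
  convert h3 using 1
  ext x
  constructor
  · rintro ⟨hxB, hxv⟩
    have hx0 : x ≠ 0 := by rintro rfl; simp at hxv
    have hn : 0 < ‖x‖ := norm_pos_iff.mpr hx0
    exact ⟨(x, ‖x‖), ⟨hxv, hn, hxB.1, hxB.2⟩, by simp [hn.ne']⟩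
  · rintro ⟨⟨y, s⟩, ⟨hy, hs0, hs1, hs2⟩, rfl⟩
    have hy : 0 < ⟪y, v⟫ := hy
    have hs0 : 0 < s := hs0
    have hy0 : y ≠ 0 := by rintro rfl; simp at hy
    have hn : 0 < ‖y‖ := norm_pos_iff.mpr hy0
    have hns : ‖(s / ‖y‖) • y‖ = s := by
      rw [norm_smul, Real.norm_eq_abs, abs_of_pos (by positivity)]
      field_simp
    refine ⟨?_, ?_⟩
    · simp only [Bd, mem_ofPred_eq, hns]; exact ⟨hs1, hs2⟩
    · simp only [real_inner_smul_left]; positivity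

namespace Sol

theorem per_nat (h : Sol ρ τ T L u) {x : EuclideanSpace ℝ (Fin N)} (hx : x ∈ Cl ρ τ) {t : ℝ}
    (ht : 0 ≤ t) (n : ℕ) : u x (t + n * T) = u x t := by
  induction n with
  | zero => simp
  | succ n ih =>
    have h0 : 0 ≤ t + n * T := by have := h.T_pos; positivity
    rw [← ih, ← h.per x hx _ h0]
    congr 1
    push_cast
    ring

theorem dif_per_nat (h : Sol ρ τ T L u) (v : EuclideanSpace ℝ (Fin N))
    {x : EuclideanSpace ℝ (Fin N)} (hx : x ∈ Cl ρ τ) {t : ℝ}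
    (ht : 0 ≤ t) (n : ℕ) : dif u v x (t + n * T) = dif u v x t := by
  rw [dif, dif, h.per_nat hx ht, h.per_nat (rf_mem_Cl.mpr hx) ht]

theorem exists_time (h : Sol ρ τ T L u) (v : EuclideanSpace ℝ (Fin N)) {t : ℝ} (ht : 0 ≤ t) :
    ∃ t' ∈ Icc T (2 * T), ∀ x ∈ Cl ρ τ, dif u v x t = dif u v x t' := by
  have hT := h.T_pos
  set n := ⌊t / T⌋₊ with hn
  have h1 : (n : ℝ) * T ≤ t := by
    rw [← le_div_iff₀ hT]; exact Nat.floor_le (by positivity)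
  have h2 : t < (n + 1) * T := by
    rw [← div_lt_iff₀ hT]; exact Nat.lt_floor_add_one _
  refine ⟨t - n * T + T, ⟨by linarith, by linarith⟩, fun x hx => ?_⟩
  have h3 := h.dif_per_nat v hx (t := t - n * T) (by linarith) n
  have h4 := h.dif_per_nat v hx (t := t - n * T) (by linarith) 1
  rw [sub_add_cancel] at h3
  rw [Nat.cast_one, one_mul] at h4
  rw [h3, h4]

/-- Strong maximum principle for periodic differences: by periodicity, `spread` gives positivity at
all times, and the set of points positive at all times is open and closed in the half domain. -/
theorem pos_of_nonneg (h : Sol ρ τ T L u) {v : EuclideanSpace ℝ (Fin N)}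
    (hM : ∀ t, 0 ≤ t → ∀ x ∈ halfDom (Bd ρ τ) v, 0 ≤ dif u v x t)
    {y : EuclideanSpace ℝ (Fin N)} (hy : y ∈ halfDom (Bd ρ τ) v) {s : ℝ} (hs : 0 ≤ s)
    (hpos : 0 < dif u v y s) :
    ∀ t, 0 ≤ t → ∀ x ∈ halfDom (Bd ρ τ) v, 0 < dif u v x t := by
  have claim : ∀ (y z : EuclideanSpace ℝ (Fin N)) (r s : ℝ), closedBall y r ⊆ halfDom (Bd ρ τ) v →
      z ∈ ball y r → 0 ≤ s → 0 < dif u v y s → ∀ t, 0 ≤ t → 0 < dif u v z t := by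
    intro y z r s hr hz hs hpos t ht
    obtain ⟨n, hn⟩ := exists_nat_gt (s / T)
    rw [div_lt_iff₀ h.T_pos] at hn
    rw [← h.dif_per_nat v (Bd_subset_Cl (hr (ball_subset_closedBall hz)).1) ht n]
    exact h.spread hM hr hs (by linarith) hz hpos
  have hball : ∀ y ∈ halfDom (Bd ρ τ) v, ∃ r > 0, closedBall y r ⊆ halfDom (Bd ρ τ) v :=
    fun y hy => Metric.nhds_basis_closedBall.mem_iff.mp ((isOpen_half v).mem_nhds hy)
  set U := {x ∈ halfDom (Bd ρ τ) v | ∀ t, 0 ≤ t → 0 < dif u v x t} with hU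
  have hUo : IsOpen U := by
    rw [isOpen_iff_mem_nhds]
    rintro x ⟨hx, hxp⟩
    obtain ⟨r, hr0, hr⟩ := hball x hx
    filter_upwards [ball_mem_nhds x hr0] with z hz
    exact ⟨hr (ball_subset_closedBall hz), claim x z r 0 hr hz le_rfl (hxp 0 le_rfl)⟩
  have hsub : halfDom (Bd ρ τ) v ⊆ U := by
    refine (isPreconnected_half v).subset_of_closure_inter_subset hUo ?_ ?_
    · obtain ⟨r, hr0, hr⟩ := hball y hy
      exact ⟨y, hy, hy, claim y y r s hr (mem_ball_self hr0) hs hpos⟩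
    · rintro x ⟨hxc, hx⟩
      obtain ⟨r, hr0, hr⟩ := hball x hx
      obtain ⟨z, hzU, hz⟩ := Metric.mem_closure_iff.mp hxc (r / 2) (by positivity)
      refine ⟨hx, claim z x (r / 2) 0 ?_ hz le_rfl (hzU.2 0 le_rfl)⟩
      refine (closedBall_subset_closedBall' ?_).trans hr
      rw [dist_comm]
      linarith
  exact fun t ht x hx => (hsub hx).2 t ht

/-- Maximum principle in narrow domains: if the difference is positive on the part of the half domain
away from its boundary, it is nonnegative on all of it. The quotient of the difference by the positive
function `P ∘ d` is considered at a negative minimum over one period, where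
`P s = 1 + K * (2 * δ * s - s ^ 2)` and `d` is the minimum of `δ` and of the three functions `⟪x, v⟫`,
`τ - ‖x‖ ^ 2`, `‖x‖ ^ 2 - ρ`, which vanish on the three parts of the boundary. There one of these
functions is active, and `P` of it is smooth with Laplacian at most `-2 * (L + 1)`. -/
theorem nonneg_of_narrow (h : Sol ρ τ T L u) {v : EuclideanSpace ℝ (Fin N)} {δ γ : ℝ}
    (hδ : 0 < δ) (hγ : 0 < γ) (hv : γ ≤ ‖v‖ ^ 2) (hNδ : N * δ ≤ γ) (hτγ : γ + δ ≤ τ)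
    (hργ : γ ≤ ρ ∨ ρ + δ ≤ 0) (hδγ : (L + 1) * δ ^ 2 ≤ γ)
    (hpos : ∀ x : EuclideanSpace ℝ (Fin N), δ ≤ ⟪x, v⟫ → δ ≤ ‖x‖ ^ 2 - ρ → δ ≤ τ - ‖x‖ ^ 2 →
      ∀ t ∈ Icc T (2 * T), 0 < dif u v x t) :
    ∀ t, 0 ≤ t → ∀ x ∈ halfDom (Bd ρ τ) v, 0 ≤ dif u v x t := by
  intro t₀ ht₀ x₁ hx₁
  obtain ⟨t₁, ht₁, hper⟩ := h.exists_time v ht₀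
  rw [hper x₁ (Bd_subset_Cl hx₁.1)]
  clear hper
  by_contra hneg
  push Not at hneg
  have hT := h.T_pos
  have hL := h.L_pos
  set K := (L + 1) / γ with hK
  have hK0 : 0 < K := by positivity
  have hKγ : K * γ = L + 1 := by rw [hK]; field_simp
  have hKδ : K * δ ^ 2 ≤ 1 := by
    rw [hK, div_mul_eq_mul_div, div_le_one hγ]; exact hδγ
  let d : EuclideanSpace ℝ (Fin N) → ℝ :=
    fun x => min (min ⟪x, v⟫ (τ - ‖x‖ ^ 2)) (min (‖x‖ ^ 2 - ρ) δ)
  have hdc : Continuous d := by simp only [d]; fun_prop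
  have hdδ : ∀ x, d x ≤ δ := fun x => (min_le_right _ _).trans (min_le_right _ _)
  let P : ℝ → ℝ := fun s => 1 + K * (2 * δ * s - s ^ 2)
  have hPmono : ∀ a b, a ≤ b → b ≤ δ → P a ≤ P b := by
    intro a b hab hb
    simp only [P]
    have : 0 ≤ K * ((b - a) * (2 * δ - a - b)) :=
      mul_nonneg hK0.le (mul_nonneg (by linarith) (by linarith))
    nlinarith
  have hP2 : ∀ s, P s ≤ 2 := by
    intro s
    simp only [P]
    have : 0 ≤ K * (δ - s) ^ 2 := by positivity
    nlinarith
  set Q := {x : EuclideanSpace ℝ (Fin N) | x ∈ Cl ρ τ ∧ 0 ≤ ⟪x, v⟫} with hQ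
  have hP1 : ∀ x ∈ Q, 1 ≤ P (d x) := by
    rintro x ⟨hx1, hx2⟩
    have h0 : 0 ≤ d x := by
      simp only [d, le_min_iff]
      exact ⟨⟨hx2, by linarith [hx1.2]⟩, by linarith [hx1.1], hδ.le⟩
    have := hPmono 0 (d x) h0 (hdδ x)
    simpa [P] using this
  have hPc : Continuous fun x => P (d x) := by simp only [P]; fun_prop
  have hF : ContinuousOn (fun p : EuclideanSpace ℝ (Fin N) × ℝ => dif u v p.1 p.2 / P (d p.1))
      (Q ×ˢ Icc T (2 * T)) := by
    refine ContinuousOn.div ((h.cont_dif v).mono ?_) (hPc.comp continuous_fst).continuousOn ?_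
    · exact prod_mono (fun x hx => hx.1) (fun s hs => hT.le.trans hs.1)
    · rintro p ⟨hp, -⟩
      exact (zero_lt_one.trans_le (hP1 p.1 hp)).ne'
  have hmem : (x₁, t₁) ∈ Q ×ˢ Icc T (2 * T) := ⟨⟨Bd_subset_Cl hx₁.1, hx₁.2.le⟩, ht₁⟩
  obtain ⟨⟨x, t⟩, ⟨hxQ, ht⟩, hmin⟩ := ((isCompact_closedHalf (ρ := ρ) (τ := τ) v).prod
    (isCompact_Icc (a := T) (b := 2 * T))).exists_isMinOn ⟨_, hmem⟩ hF
  have hxQ : x ∈ Q := hxQ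
  have ht : t ∈ Icc T (2 * T) := ht
  have hmin' : ∀ y s, y ∈ Q → s ∈ Icc T (2 * T) →
      dif u v x t / P (d x) ≤ dif u v y s / P (d y) :=
    fun y s h1 h2 => hmin (show (y, s) ∈ _ from ⟨h1, h2⟩)
  set m := dif u v x t / P (d x) with hm
  have hPx : 0 < P (d x) := zero_lt_one.trans_le (hP1 x hxQ)
  have hm0 : m < 0 := lt_of_le_of_lt (hmin' x₁ t₁ hmem.1 hmem.2)
    (div_neg_of_neg_of_pos hneg (zero_lt_one.trans_le (hP1 x₁ hmem.1)))
  have hw : dif u v x t = m * P (d x) := by rw [hm]; field_simp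
  have hwneg : dif u v x t < 0 := by rw [hw]; exact mul_neg_of_neg_of_pos hm0 hPx
  have hlow : ∀ y s, y ∈ Q → 0 ≤ s → m * P (d y) ≤ dif u v y s := by
    intro y s hy hs
    obtain ⟨s', hs', he⟩ := h.exists_time v hs
    rw [he y hy.1, ← le_div_iff₀ (zero_lt_one.trans_le (hP1 y hy))]
    exact hmin' y s' hy hs'
  have htpos : 0 < t := hT.trans_le ht.1
  have hxh := h.mem_half hxQ.1 hxQ.2 htpos.le hwneg.ne
  obtain ⟨a, l, ha, hl, hal⟩ := h.eqn v x hxh.1 t htpos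
  have ha' : a ≤ 0 := by
    refine time_le_of_touch ha (hasDerivAt_const t (m * P (d x))) ?_ hw
    filter_upwards [Ioo_mem_nhdsLT htpos] with s hs
    exact hlow x s hxQ hs.1.le
  -- `q y = c0 + ⟪y, k⟫ + c * ‖y‖ ^ 2` is the active function: it bounds `d` from above, with equality
  -- at `x`, so `m * (P ∘ q)` touches the difference from below there
  have barrier : ∀ (c0 c : ℝ) (k : EuclideanSpace ℝ (Fin N)),
      c0 + ⟪x, k⟫ + c * ‖x‖ ^ 2 = d x → d x < δ →
      (∀ y, d y ≤ c0 + ⟪y, k⟫ + c * ‖y‖ ^ 2) →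
      (2 * K * δ - 2 * K * d x) * (2 * c * N) - 2 * K * ‖k + (2 * c) • x‖ ^ 2 ≤ -(2 * (L + 1)) →
      False := by
    intro c0 c k hq hqδ hqd hlap
    have hsd := spaceData_quad m (m * K * (2 * δ)) (-(m * K)) c0 c k x
    have hl' := hl.le_of_touch hsd ?_ ?_
    · rw [hq] at hl'
      have h1 : m * -(2 * (L + 1)) ≤ m * ((2 * K * δ - 2 * K * d x) * (2 * c * N)
          - 2 * K * ‖k + (2 * c) • x‖ ^ 2) := mul_le_mul_of_nonpos_left hlap hm0.le
      rw [abs_of_neg hwneg, hw] at hal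
      have h2 := (abs_le.mp hal).1
      have h3 : m * 2 ≤ m * P (d x) := mul_le_mul_of_nonpos_left (hP2 _) hm0.le
      have h4 : L * (m * 2) ≤ L * (m * P (d x)) := mul_le_mul_of_nonneg_left h3 hL.le
      nlinarith
    · have hqc : Continuous fun y : EuclideanSpace ℝ (Fin N) => c0 + ⟪y, k⟫ + c * ‖y‖ ^ 2 := by
        fun_prop
      have hev : ∀ᶠ y in 𝓝 x, c0 + ⟪y, k⟫ + c * ‖y‖ ^ 2 < δ :=
        hqc.continuousAt.eventually (gt_mem_nhds (show c0 + ⟪x, k⟫ + c * ‖x‖ ^ 2 < δ by rw [hq]; exact hqδ))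
      filter_upwards [hev, (isOpen_half v).mem_nhds hxh] with y hy1 hy2
      have h1 := hPmono _ _ (hqd y) hy1.le
      have h2 := mul_le_mul_of_nonpos_left h1 hm0.le
      have h3 := hlow y t ⟨Bd_subset_Cl hy2.1, hy2.2.le⟩ htpos.le
      simp only [P] at h2 h3
      linarith
    · rw [hw, hq]
      simp only [P]
      ring
  have hd1 : ∀ y, d y ≤ ⟪y, v⟫ := fun y => (min_le_left _ _).trans (min_le_left _ _)
  have hd2 : ∀ y, d y ≤ τ - ‖y‖ ^ 2 := fun y => (min_le_left _ _).trans (min_le_right _ _)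
  have hd3 : ∀ y, d y ≤ ‖y‖ ^ 2 - ρ := fun y => (min_le_right _ _).trans (min_le_left _ _)
  have hdlt : d x < δ := by
    refine lt_of_le_of_ne (hdδ x) fun he => ?_
    exact absurd (hpos x (he ▸ hd1 x) (he ▸ hd3 x) (he ▸ hd2 x) t ht) (not_lt.mpr hwneg.le)
  have hd0 : 0 ≤ d x := by
    simp only [d, le_min_iff]
    exact ⟨⟨hxQ.2, by linarith [hxQ.1.2]⟩, by linarith [hxQ.1.1], hδ.le⟩
  have hKd : 0 ≤ K * (δ - d x) := mul_nonneg hK0.le (by linarith)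
  have hcases : d x = ⟪x, v⟫ ∨ d x = τ - ‖x‖ ^ 2 ∨ d x = ‖x‖ ^ 2 - ρ := by
    have hmin3 : ∀ a b c δ : ℝ, min (min a b) (min c δ) < δ → min (min a b) (min c δ) = a ∨
        min (min a b) (min c δ) = b ∨ min (min a b) (min c δ) = c := by
      intro a b c δ hlt
      rcases min_choice (min a b) (min c δ) with h1 | h1
      · rw [h1]
        rcases min_choice a b with h2 | h2 <;> simp [h2]
      · rw [h1] at hlt ⊢
        rcases min_choice c δ with h2 | h2
        · simp [h2]
        · exact absurd hlt (by simp [h2])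
    exact hmin3 _ _ _ _ hdlt
  rcases hcases with hc | hc | hc
  · refine barrier 0 0 v (by simp [hc]) hdlt (fun y => by simpa using hd1 y) ?_
    have := mul_le_mul_of_nonneg_left hv hK0.le
    simp
    linarith
  · refine barrier τ (-1) 0 (by simp [hc]; ring) hdlt (fun y => ?_) ?_
    · have := hd2 y
      simp
      linarith
    · have h1 : γ ≤ ‖x‖ ^ 2 := by linarith
      have h2 := mul_le_mul_of_nonneg_left h1 hK0.le
      have h3 : 0 ≤ K * (δ - d x) * N := by positivity
      rw [zero_add, norm_smul, mul_pow]
      norm_num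
      nlinarith
  · refine barrier (-ρ) 1 0 (by simp [hc]; ring) hdlt (fun y => ?_) ?_
    · have := hd3 y
      simp
      linarith
    · have h1 : γ ≤ ‖x‖ ^ 2 := by
        rcases hργ with h1 | h1
        · exact h1.trans hxQ.1.1
        · nlinarith [sq_nonneg ‖x‖]
      have h2 := mul_le_mul_of_nonneg_left h1 hK0.le
      have h3 : 0 ≤ K * d x * N := by positivity
      have h4 := mul_le_mul_of_nonneg_left hNδ hK0.le
      rw [zero_add, norm_smul, mul_pow]
      norm_num
      nlinarith

end Sol

/-! ### Weak, strict and symmetric directions -/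

/-- `Weak ρ τ u v`: the solution dominates its reflection on the side of `v` at all times.
This holds vacuously for `v = 0`. -/
def Weak (ρ τ : ℝ) (u : EuclideanSpace ℝ (Fin N) → ℝ → ℝ) (v : EuclideanSpace ℝ (Fin N)) : Prop :=
  ∀ t, 0 ≤ t → ∀ x ∈ halfDom (Bd ρ τ) v, 0 ≤ dif u v x t

/-- `Strict ρ τ u v`: `v` is nonzero and the solution strictly dominates its reflection on the side
of `v` at all times. -/
def Strict (ρ τ : ℝ) (u : EuclideanSpace ℝ (Fin N) → ℝ → ℝ) (v : EuclideanSpace ℝ (Fin N)) :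
    Prop :=
  v ≠ 0 ∧ ∀ t, 0 ≤ t → ∀ x ∈ halfDom (Bd ρ τ) v, 0 < dif u v x t

/-- `Symm ρ τ u v`: the solution is invariant under the reflection `rf v` at all times.
This holds for `v = 0`, because `rf 0` is the identity. -/
def Symm (ρ τ : ℝ) (u : EuclideanSpace ℝ (Fin N) → ℝ → ℝ) (v : EuclideanSpace ℝ (Fin N)) : Prop :=
  ∀ t, 0 ≤ t → ∀ x ∈ Bd ρ τ, u (rf v x) t = u x t


theorem symm_zero : Symm ρ τ u 0 := fun t _ x _ => by rw [rf_zero]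

theorem Symm.smul {v : EuclideanSpace ℝ (Fin N)} (hv : Symm ρ τ u v) (c : ℝ) :
    Symm ρ τ u (c • v) := by
  rcases eq_or_ne c 0 with rfl | hc
  · rw [zero_smul]; exact symm_zero
  · intro t ht x hx
    rw [rf_smul_left hc]
    exact hv t ht x hx

theorem mem_half_smul {v x : EuclideanSpace ℝ (Fin N)} {c : ℝ} (hc : 0 < c) :
    x ∈ halfDom (Bd ρ τ) (c • v) ↔ x ∈ halfDom (Bd ρ τ) v := by
  simp only [halfDom, mem_ofPred_eq, real_inner_smul_right, mul_pos_iff_of_pos_left hc]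

theorem dif_smul {c : ℝ} (hc : c ≠ 0) (v x : EuclideanSpace ℝ (Fin N)) (t : ℝ) :
    dif u (c • v) x t = dif u v x t := by
  rw [dif, dif, rf_smul_left hc]

theorem Weak.smul {v : EuclideanSpace ℝ (Fin N)} (hv : Weak ρ τ u v) {c : ℝ} (hc : 0 < c) :
    Weak ρ τ u (c • v) := by
  intro t ht x hx
  rw [dif_smul hc.ne']
  exact hv t ht x ((mem_half_smul hc).mp hx)

theorem Strict.smul {v : EuclideanSpace ℝ (Fin N)} (hv : Strict ρ τ u v) {c : ℝ} (hc : 0 < c) :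
    Strict ρ τ u (c • v) := by
  refine ⟨smul_ne_zero hc.ne' hv.1, fun t ht x hx => ?_⟩
  rw [dif_smul hc.ne']
  exact hv.2 t ht x ((mem_half_smul hc).mp hx)

theorem Strict.weak {v : EuclideanSpace ℝ (Fin N)} (hv : Strict ρ τ u v) : Weak ρ τ u v :=
  fun t ht x hx => (hv.2 t ht x hx).le

theorem Symm.weak {v : EuclideanSpace ℝ (Fin N)} (hv : Symm ρ τ u v) : Weak ρ τ u v :=
  fun t ht x hx => by rw [dif, hv t ht x hx.1, sub_self]

theorem symm_of_eq_zero {v : EuclideanSpace ℝ (Fin N)}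
    (hv : ∀ t, 0 ≤ t → ∀ x ∈ halfDom (Bd ρ τ) v, dif u v x t = 0) : Symm ρ τ u v := by
  intro t ht x hx
  suffices dif u v x t = 0 by rw [dif] at this; linarith
  rcases lt_trichotomy ⟪x, v⟫ 0 with hneg | h0 | hpos
  · have := hv t ht (rf v x) ⟨rf_mem_Bd.mpr hx, by rw [inner_rf]; linarith⟩
    rw [dif_rf] at this
    linarith
  · exact dif_eq_zero_of_inner h0 t
  · exact hv t ht x ⟨hx, hpos⟩

theorem symm_of_weak_of_weak_neg {v : EuclideanSpace ℝ (Fin N)} (h1 : Weak ρ τ u v)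
    (h2 : Weak ρ τ u (-v)) : Symm ρ τ u v := by
  refine symm_of_eq_zero fun t ht x hx => le_antisymm ?_ (h1 t ht x hx)
  have h3 := h2 t ht (rf v x) ⟨rf_mem_Bd.mpr hx.1, by
    rw [inner_neg_right, inner_rf, neg_neg]; exact hx.2⟩
  rw [← neg_one_smul ℝ v, dif_smul (by norm_num), dif_rf] at h3
  linarith

namespace Sol

theorem exists_scale (h : Sol ρ τ T L u) {y : EuclideanSpace ℝ (Fin N)} (hy : y ≠ 0) :
    ∃ k : ℝ, 0 < k ∧ k • y ∈ Bd ρ τ := by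
  have hn : 0 < ‖y‖ := norm_pos_iff.mpr hy
  have hm : max ρ 0 < τ := max_lt h.lt h.pos
  have h1 := le_max_left ρ 0
  have h2 := le_max_right ρ 0
  have hs : 0 < (max ρ 0 + τ) / 2 := by linarith [h.pos]
  refine ⟨Real.sqrt ((max ρ 0 + τ) / 2) / ‖y‖, div_pos (Real.sqrt_pos.mpr hs) hn, ?_⟩
  have : ‖(Real.sqrt ((max ρ 0 + τ) / 2) / ‖y‖) • y‖ ^ 2 = (max ρ 0 + τ) / 2 := by
    rw [norm_smul, norm_div, norm_norm, div_mul_cancel₀ _ hn.ne', Real.norm_eq_abs, sq_abs,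
      Real.sq_sqrt hs.le]
  simp only [Bd, mem_ofPred_eq, this]
  constructor <;> linarith

theorem half_nonempty (h : Sol ρ τ T L u) {v : EuclideanSpace ℝ (Fin N)} (hv : v ≠ 0) :
    ∃ x, x ∈ halfDom (Bd ρ τ) v := by
  obtain ⟨k, hk, hkB⟩ := h.exists_scale hv
  refine ⟨k • v, hkB, ?_⟩
  rw [real_inner_smul_left]
  exact mul_pos hk (real_inner_self_pos.mpr hv)

theorem not_symm_of_strict (h : Sol ρ τ T L u) {v : EuclideanSpace ℝ (Fin N)}
    (hv : Strict ρ τ u v) : ¬ Symm ρ τ u v := by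
  intro hs
  obtain ⟨x, hx⟩ := h.half_nonempty hv.1
  have := hv.2 0 le_rfl x hx
  rw [dif, hs 0 le_rfl x hx.1, sub_self] at this
  exact lt_irrefl _ this

/-- The dichotomy given by the strong maximum principle. -/
theorem strict_or_symm (h : Sol ρ τ T L u) {v : EuclideanSpace ℝ (Fin N)} (hv : Weak ρ τ u v) :
    Strict ρ τ u v ∨ Symm ρ τ u v := by
  by_cases hp : ∃ s, 0 ≤ s ∧ ∃ y ∈ halfDom (Bd ρ τ) v, 0 < dif u v y s
  · obtain ⟨s, hs, y, hy, hpos⟩ := hp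
    refine Or.inl ⟨?_, h.pos_of_nonneg hv hy hs hpos⟩
    rintro rfl
    simp [halfDom] at hy
  · push Not at hp
    exact Or.inr (symm_of_eq_zero fun t ht x hx => le_antisymm (hp t ht x hx) (hv t ht x hx))

theorem weak_of_tendsto (h : Sol ρ τ T L u) {ι : Type*} {l : Filter ι} [l.NeBot]
    {g : ι → EuclideanSpace ℝ (Fin N)} {v : EuclideanSpace ℝ (Fin N)} (hg : Tendsto g l (𝓝 v))
    (hw : ∀ᶠ i in l, Weak ρ τ u (g i)) : Weak ρ τ u v := by
  intro t ht x hx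
  have hv : v ≠ 0 := by
    rintro rfl
    simp [halfDom] at hx
  have h1 : Tendsto (fun i => rf (g i) x) l (𝓝 (rf v x)) :=
    (continuousAt_rf_uncurry (x := x) hv).tendsto.comp (hg.prodMk_nhds tendsto_const_nhds)
  have h2 : Tendsto (fun i => u (rf (g i) x) t) l (𝓝 (u (rf v x) t)) := by
    have h3 : ContinuousWithinAt (fun p : EuclideanSpace ℝ (Fin N) × ℝ => u p.1 p.2)
        (Cl ρ τ ×ˢ Ici 0) (rf v x, t) :=
      h.cont _ ⟨rf_mem_Cl.mpr (Bd_subset_Cl hx.1), ht⟩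
    refine h3.tendsto.comp (tendsto_nhdsWithin_iff.mpr
      ⟨h1.prodMk_nhds (tendsto_const_nhds (x := t)), ?_⟩)
    exact Eventually.of_forall fun i => ⟨rf_mem_Cl.mpr (Bd_subset_Cl hx.1), ht⟩
  have h4 : Tendsto (fun i => dif u (g i) x t) l (𝓝 (dif u v x t)) := tendsto_const_nhds.sub h2
  have h5 : Tendsto (fun i => ⟪x, g i⟫) l (𝓝 ⟪x, v⟫) := tendsto_const_nhds.inner hg
  refine ge_of_tendsto h4 ?_
  filter_upwards [hw, h5.eventually (lt_mem_nhds hx.2)] with i hi1 hi2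
  exact hi1 t ht x ⟨hx.1, hi2⟩

/-- Strict domination is an open condition on the direction: on a compact core it persists by
continuity, and the remaining thin region is handled by `nonneg_of_narrow`. -/
theorem strict_eventually (h : Sol ρ τ T L u) {e : EuclideanSpace ℝ (Fin N)}
    (he : Strict ρ τ u e) : ∀ᶠ e' in 𝓝 e, Strict ρ τ u e' := by
  have hn : 0 < ‖e‖ := norm_pos_iff.mpr he.1
  have hτ := h.pos
  have hT := h.T_pos
  have hL := h.L_pos
  obtain ⟨γ, hγ0, hγe, hγτ, hγρ⟩ : ∃ γ : ℝ, 0 < γ ∧ γ < ‖e‖ ^ 2 ∧ γ ≤ τ / 2 ∧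
      (γ ≤ ρ ∨ ρ = -1) := by
    rcases h.inner_radius with hρ | hρ
    · exact ⟨min (‖e‖ ^ 2 / 2) (min (τ / 2) ρ), by positivity,
        (min_le_left _ _).trans_lt (half_lt_self (by positivity)),
        (min_le_right _ _).trans (min_le_left _ _),
        Or.inl ((min_le_right _ _).trans (min_le_right _ _))⟩
    · exact ⟨min (‖e‖ ^ 2 / 2) (τ / 2), by positivity,
        (min_le_left _ _).trans_lt (half_lt_self (by positivity)),
        min_le_right _ _, Or.inr hρ⟩
  obtain ⟨δ, hδ0, hδ1, hδτ, hNδ, hLδ⟩ : ∃ δ : ℝ, 0 < δ ∧ δ ≤ 1 ∧ δ ≤ τ / 2 ∧ N * δ ≤ γ ∧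
      (L + 1) * δ ^ 2 ≤ γ := by
    refine ⟨min (min 1 (τ / 2)) (min (γ / (N + 1)) (γ / (L + 1))), by positivity,
      (min_le_left _ _).trans (min_le_left _ _), (min_le_left _ _).trans (min_le_right _ _), ?_, ?_⟩
    · have h1 : min (min 1 (τ / 2)) (min (γ / (N + 1)) (γ / (L + 1))) ≤ γ / (N + 1) :=
        (min_le_right _ _).trans (min_le_left _ _)
      rw [le_div_iff₀ (by positivity)] at h1
      have h0 : 0 < min (min 1 (τ / 2)) (min (γ / (N + 1)) (γ / (L + 1))) := by positivity
      nlinarith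
    · have h1 : min (min 1 (τ / 2)) (min (γ / (N + 1)) (γ / (L + 1))) ≤ γ / (L + 1) :=
        (min_le_right _ _).trans (min_le_right _ _)
      have h2 : min (min 1 (τ / 2)) (min (γ / (N + 1)) (γ / (L + 1))) ≤ 1 :=
        (min_le_left _ _).trans (min_le_left _ _)
      rw [le_div_iff₀ (by positivity)] at h1
      have h0 : 0 < min (min 1 (τ / 2)) (min (γ / (N + 1)) (γ / (L + 1))) := by positivity
      generalize min (min 1 (τ / 2)) (min (γ / (N + 1)) (γ / (L + 1))) = d at *
      calc (L + 1) * d ^ 2 = (d * (L + 1)) * d := by ring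
        _ ≤ (d * (L + 1)) * 1 := mul_le_mul_of_nonneg_left h2 (by positivity)
        _ ≤ γ := by linarith
  set C := {x : EuclideanSpace ℝ (Fin N) | x ∈ Cl ρ τ ∧
    (δ / 2 ≤ ⟪x, e⟫ ∧ δ ≤ ‖x‖ ^ 2 - ρ ∧ δ ≤ τ - ‖x‖ ^ 2)} with hC
  have hCc : IsCompact C := by
    refine isCompact_Cl.inter_right (IsClosed.inter ?_ (IsClosed.inter ?_ ?_))
    · exact isClosed_le (f := fun _ : EuclideanSpace ℝ (Fin N) => δ / 2) (by fun_prop) (by fun_prop)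
    · exact isClosed_le (f := fun _ : EuclideanSpace ℝ (Fin N) => δ) (by fun_prop) (by fun_prop)
    · exact isClosed_le (f := fun _ : EuclideanSpace ℝ (Fin N) => δ) (by fun_prop) (by fun_prop)
  have huc : ∀ x ∈ Bd ρ τ, ∀ t, 0 < t →
      ContinuousAt (fun p : EuclideanSpace ℝ (Fin N) × ℝ => u p.1 p.2) (x, t) := by
    intro x hx t ht
    refine h.cont.continuousAt (prod_mem_nhds ?_ (Ici_mem_nhds ht))
    exact mem_of_superset (isOpen_Bd.mem_nhds hx) Bd_subset_Cl
  have hdc : ∀ x ∈ Bd ρ τ, ∀ t, 0 < t →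
      ContinuousAt (fun z : EuclideanSpace ℝ (Fin N) × EuclideanSpace ℝ (Fin N) × ℝ =>
        dif u z.1 z.2.1 z.2.2) (e, x, t) := by
    intro x hxB t ht0
    refine ContinuousAt.sub ?_ ?_
    · exact ContinuousAt.comp (x := (e, x, t))
        (f := fun z : EuclideanSpace ℝ (Fin N) × EuclideanSpace ℝ (Fin N) × ℝ => z.2)
        (g := fun p : EuclideanSpace ℝ (Fin N) × ℝ => u p.1 p.2)
        (huc x hxB t ht0) continuousAt_snd
    · have hr : ContinuousAt (fun z : EuclideanSpace ℝ (Fin N) × EuclideanSpace ℝ (Fin N) × ℝ =>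
          rf z.1 z.2.1) (e, x, t) :=
        ContinuousAt.comp (x := (e, x, t))
          (f := fun z : EuclideanSpace ℝ (Fin N) × EuclideanSpace ℝ (Fin N) × ℝ => (z.1, z.2.1))
          (g := fun p : EuclideanSpace ℝ (Fin N) × EuclideanSpace ℝ (Fin N) => rf p.1 p.2)
          (continuousAt_rf_uncurry he.1) (Continuous.continuousAt (by fun_prop))
      exact ContinuousAt.comp (x := (e, x, t))
        (f := fun z : EuclideanSpace ℝ (Fin N) × EuclideanSpace ℝ (Fin N) × ℝ =>
          (rf z.1 z.2.1, z.2.2))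
        (g := fun p : EuclideanSpace ℝ (Fin N) × ℝ => u p.1 p.2)
        (huc _ (rf_mem_Bd.mpr hxB) t ht0) (hr.prodMk (Continuous.continuousAt (by fun_prop)))
  have htube : ∀ᶠ e' in 𝓝 e, ∀ q ∈ C ×ˢ Icc T (2 * T), 0 < dif u e' q.1 q.2 := by
    refine (hCc.prod isCompact_Icc).eventually_forall_of_forall_eventually ?_
    rintro ⟨x, t⟩ ⟨⟨hx1, hx2, hx3, hx4⟩, ht⟩
    have ht0 : 0 < t := hT.trans_le ht.1
    have hx2 : δ / 2 ≤ ⟪x, e⟫ := hx2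
    have hx3 : δ ≤ ‖x‖ ^ 2 - ρ := hx3
    have hx4 : δ ≤ τ - ‖x‖ ^ 2 := hx4
    have hxB : x ∈ Bd ρ τ := ⟨by linarith, by linarith⟩
    exact (hdc x hxB t ht0).eventually (lt_mem_nhds (he.2 t ht0.le x ⟨hxB, by linarith⟩))
  obtain ⟨x₀, hx₀⟩ := h.half_nonempty he.1
  have hpoint : ∀ᶠ e' in 𝓝 e, 0 < dif u e' x₀ T := by
    have hc : ContinuousAt (fun e' : EuclideanSpace ℝ (Fin N) => dif u e' x₀ T) e :=
      ContinuousAt.comp (x := e)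
        (f := fun e' : EuclideanSpace ℝ (Fin N) => (e', x₀, T))
        (g := fun z : EuclideanSpace ℝ (Fin N) × EuclideanSpace ℝ (Fin N) × ℝ =>
          dif u z.1 z.2.1 z.2.2)
        (hdc x₀ hx₀.1 T hT) (Continuous.continuousAt (by fun_prop))
    exact hc.eventually (lt_mem_nhds (he.2 T hT.le x₀ hx₀))
  have hnear : ∀ᶠ e' in 𝓝 e, Real.sqrt τ * ‖e' - e‖ < δ / 2 := by
    have hc : Continuous fun e' : EuclideanSpace ℝ (Fin N) => Real.sqrt τ * ‖e' - e‖ := by fun_prop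
    refine hc.continuousAt.eventually (gt_mem_nhds ?_)
    simpa using hδ0
  have hnorm : ∀ᶠ e' in 𝓝 e, γ < ‖e'‖ ^ 2 := by
    have hc : Continuous fun e' : EuclideanSpace ℝ (Fin N) => ‖e'‖ ^ 2 := by fun_prop
    exact hc.continuousAt.eventually (lt_mem_nhds hγe)
  filter_upwards [htube, hnear, hnorm, hpoint] with e' h1 h2 h3 h4
  have hweak : Weak ρ τ u e' := by
    refine h.nonneg_of_narrow hδ0 hγ0 h3.le hNδ (by linarith) ?_ hLδ ?_
    · rcases hγρ with h5 | h5
      · exact Or.inl h5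
      · exact Or.inr (by linarith)
    · intro x hx1 hx2 hx3 t ht
      have hxCl : x ∈ Cl ρ τ := ⟨by linarith, by linarith⟩
      refine h1 (x, t) ⟨⟨hxCl, ?_, hx2, hx3⟩, ht⟩
      have h6 : ‖x‖ ≤ Real.sqrt τ := Real.le_sqrt_of_sq_le hxCl.2
      have h7 : ⟪x, e' - e⟫ ≤ Real.sqrt τ * ‖e' - e‖ :=
        (real_inner_le_norm _ _).trans (mul_le_mul_of_nonneg_right h6 (norm_nonneg _))
      rw [inner_sub_right] at h7
      simp only
      linarith
  refine (h.strict_or_symm hweak).resolve_right fun hs => ?_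
  rw [dif, hs T hT.le x₀ hx₀.1, sub_self] at h4
  exact lt_irrefl _ h4

end Sol

/-! ### The hyperplane of symmetric directions -/

namespace Sol

/-- A continuity argument: strict domination propagates along a ray as long as the ray meets no
direction of symmetry. -/
theorem strict_ray (h : Sol ρ τ T L u) {e v : EuclideanSpace ℝ (Fin N)} (he : Strict ρ τ u e)
    (hZ : ∀ s : ℝ, 0 ≤ s → ¬ Symm ρ τ u (e + s • v)) (s : ℝ) (hs : 0 ≤ s) :
    Strict ρ τ u (e + s • v) := by
  have hc : Continuous fun r : ℝ => e + r • v := by fun_prop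
  have hsub : Icc 0 s ⊆ {r : ℝ | Strict ρ τ u (e + r • v)} := by
    refine IsClosed.Icc_subset_of_forall_mem_nhdsWithin ?_ (by simpa using he) ?_
    · refine IsSeqClosed.isClosed fun r r₀ hr hlim => ?_
      have hr₀ : r₀ ∈ Icc 0 s := isClosed_Icc.mem_of_tendsto hlim
        (Eventually.of_forall fun n => (hr n).2)
      refine ⟨(h.strict_or_symm ?_).resolve_right (hZ r₀ hr₀.1), hr₀⟩
      exact h.weak_of_tendsto ((hc.tendsto r₀).comp hlim)
        (Eventually.of_forall fun n => Strict.weak (hr n).1)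
    · rintro r ⟨hr, -⟩
      exact mem_nhdsWithin_of_mem_nhds (hc.continuousAt.eventually (h.strict_eventually hr))
  exact hsub ⟨hs, le_rfl⟩

/-- `v` is the limit of the rescaled directions `s⁻¹ • e + v`. -/
theorem weak_of_strict_ray (h : Sol ρ τ T L u) {e v : EuclideanSpace ℝ (Fin N)}
    (hs : ∀ s : ℝ, 0 ≤ s → Strict ρ τ u (e + s • v)) : Weak ρ τ u v := by
  have hlim : Tendsto (fun s : ℝ => s⁻¹ • e + v) atTop (𝓝 v) := by
    have := (tendsto_inv_atTop_zero (𝕜 := ℝ)).smul_const e |>.add_const v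
    simpa using this
  refine h.weak_of_tendsto hlim ?_
  filter_upwards [eventually_gt_atTop 0] with s hs0
  have := (hs s hs0.le).weak.smul (inv_pos.mpr hs0)
  rwa [smul_add, smul_smul, inv_mul_cancel₀ hs0.ne', one_smul] at this

/-- The span of two directions of symmetry contains no direction of strict domination: the product
of the two reflections maps a suitable `x` to `x + e`, which is also the image of `x` under `rf e`. -/
theorem not_strict_of_symm (h : Sol ρ τ T L u) {a b : EuclideanSpace ℝ (Fin N)}
    (ha : Symm ρ τ u a) (hb : Symm ρ τ u b) (α β : ℝ) : ¬ Strict ρ τ u (α • a + β • b) := by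
  intro he
  by_cases ha0 : a = 0
  · rw [ha0, smul_zero, zero_add] at he
    exact h.not_symm_of_strict he (hb.smul β)
  have hA : 0 < ‖a‖ ^ 2 := by have := norm_pos_iff.mpr ha0; positivity
  set A := ‖a‖ ^ 2 with hAdef
  set B := ‖b‖ ^ 2 with hBdef
  set c := ⟪a, b⟫ with hcdef
  have haa : ⟪a, a⟫ = A := real_inner_self_eq_norm_sq a
  have hbb : ⟪b, b⟫ = B := real_inner_self_eq_norm_sq b
  have hba : ⟪b, a⟫ = c := real_inner_comm _ _
  by_cases hD : A * B - c ^ 2 = 0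
  · have h1 : ‖A • b - c • a‖ ^ 2 = A * (A * B - c ^ 2) := by
      rw [← real_inner_self_eq_norm_sq]
      simp only [inner_sub_left, inner_sub_right, real_inner_smul_left, real_inner_smul_right,
        haa, hbb, hba, ← hcdef]
      ring
    rw [hD, mul_zero, sq_eq_zero_iff, norm_eq_zero, sub_eq_zero] at h1
    have h2 : b = (c / A) • a := by
      rw [div_eq_inv_mul, mul_smul, ← h1, smul_smul, inv_mul_cancel₀ hA.ne', one_smul]
    rw [h2, smul_smul, ← add_smul] at he
    exact h.not_symm_of_strict he (ha.smul _)
  have hB : B ≠ 0 := by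
    intro hB
    have hb0 : b = 0 := by
      rw [hBdef, sq_eq_zero_iff, norm_eq_zero] at hB; exact hB
    apply hD
    rw [hB, hcdef, hb0, inner_zero_right]
    ring
  obtain ⟨x, hxa, hxb⟩ : ∃ x : EuclideanSpace ℝ (Fin N),
      ⟪x, a⟫ = -β * c - α * A / 2 ∧ ⟪x, b⟫ = -β * B / 2 := by
    refine ⟨(((-β * c - α * A / 2) * B - c * (-β * B / 2)) / (A * B - c ^ 2)) • a +
      ((A * (-β * B / 2) - c * (-β * c - α * A / 2)) / (A * B - c ^ 2)) • b, ?_, ?_⟩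
    · rw [inner_add_left, real_inner_smul_left, real_inner_smul_left, haa, hba]
      field_simp
      ring
    · rw [inner_add_left, real_inner_smul_left, real_inner_smul_left, hbb, ← hcdef]
      field_simp
      ring
  set e := α • a + β • b with hedef
  have hr1 : rf b x = x + β • b := by
    rw [rf, hxb, ← hBdef, sub_eq_add_neg, ← neg_smul]
    congr 2
    field_simp
  have hr2 : rf a (rf b x) = x + e := by
    rw [hr1, rf, inner_add_left, real_inner_smul_left, hba, hxa, ← hAdef, hedef, sub_eq_add_neg,
      ← neg_smul, add_assoc, add_comm (β • b)]
    congr 3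
    field_simp
    ring
  have hnorm : ‖x + e‖ = ‖x‖ := by rw [← hr2, norm_rf, norm_rf]
  have hinner : ⟪x, e⟫ = - ‖e‖ ^ 2 / 2 := by
    have := norm_add_sq_real x e
    rw [hnorm] at this
    linarith
  have he2 : 0 < ‖e‖ ^ 2 := by have := norm_pos_iff.mpr he.1; positivity
  have hinner' : ⟪x + e, e⟫ = ‖e‖ ^ 2 / 2 := by
    rw [inner_add_left, hinner, real_inner_self_eq_norm_sq]; ring
  have hr3 : rf e (x + e) = x := by
    rw [rf, hinner', mul_div_cancel₀ _ two_ne_zero, div_self he2.ne', one_smul, add_sub_cancel_right]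
  have hx0 : x + e ≠ 0 := by
    intro h0
    rw [h0, inner_zero_left] at hinner'
    linarith
  obtain ⟨k, hk, hkB⟩ := h.exists_scale hx0
  have hpos := he.2 0 le_rfl (k • (x + e)) ⟨hkB, by
    rw [real_inner_smul_left, hinner']; positivity⟩
  have hkx : k • x ∈ Bd ρ τ := by
    rw [← hr3, ← rf_smul_right]; exact rf_mem_Bd.mpr hkB
  have h5 := ha 0 le_rfl (rf b (k • x)) (rf_mem_Bd.mpr hkx)
  rw [hb 0 le_rfl _ hkx, rf_smul_right, rf_smul_right, hr2] at h5
  rw [dif, rf_smul_right, hr3, h5, sub_self] at hpos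
  exact lt_irrefl _ hpos

/-- If both alternatives failed, both half-lines `e + s • q` and `e - s • q` would contain a direction
of symmetry, and `e` would lie in the span of these two. -/
theorem weak_or_weak_neg (h : Sol ρ τ T L u) {e : EuclideanSpace ℝ (Fin N)}
    (he : Strict ρ τ u e) (q : EuclideanSpace ℝ (Fin N)) : Weak ρ τ u q ∨ Weak ρ τ u (-q) := by
  by_contra hcon
  push Not at hcon
  have key : ∀ v, ¬ Weak ρ τ u v → ∃ s : ℝ, 0 ≤ s ∧ Symm ρ τ u (e + s • v) := by
    intro v hv
    by_contra hno
    push Not at hno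
    exact hv (h.weak_of_strict_ray (h.strict_ray he hno))
  obtain ⟨s, hs, hZs⟩ := key q hcon.1
  obtain ⟨r, hr, hZr⟩ := key (-q) hcon.2
  rcases hs.eq_or_lt with rfl | hs
  · rw [zero_smul, add_zero] at hZs
    exact h.not_symm_of_strict he hZs
  · have hsr : s + r ≠ 0 := by positivity
    refine h.not_strict_of_symm hZs hZr (r / (s + r)) (s / (s + r)) ?_
    convert he using 1
    match_scalars <;> field_simp <;> ring

/-- The directions of symmetry form a linear subspace. -/
def symmSubmodule (h : Sol ρ τ T L u) {e : EuclideanSpace ℝ (Fin N)} (he : Strict ρ τ u e) :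
    Submodule ℝ (EuclideanSpace ℝ (Fin N)) where
  carrier := {v | Symm ρ τ u v}
  zero_mem' := symm_zero
  smul_mem' := fun c _ hv => Symm.smul hv c
  add_mem' := by
    intro a b ha hb
    have ha : Symm ρ τ u a := ha
    have hb : Symm ρ τ u b := hb
    show Symm ρ τ u (a + b)
    rcases h.weak_or_weak_neg he (a + b) with hw | hw
    · refine (h.strict_or_symm hw).resolve_left fun hp => ?_
      refine h.not_strict_of_symm ha hb 1 1 ?_
      simpa using hp
    · have hs : Symm ρ τ u (-(a + b)) := by
        refine (h.strict_or_symm hw).resolve_left fun hp => ?_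
        refine h.not_strict_of_symm ha hb (-1) (-1) ?_
        convert hp using 1
        module
      convert hs.smul (-1) using 1
      module

/-- The subspace of symmetry directions together with `e` spans the whole space. -/
theorem exists_symm_sub (h : Sol ρ τ T L u) {e : EuclideanSpace ℝ (Fin N)}
    (he : Strict ρ τ u e) (x : EuclideanSpace ℝ (Fin N)) : ∃ c : ℝ, Symm ρ τ u (x - c • e) := by
  have key : ∀ v, ¬ Weak ρ τ u v → ∃ c : ℝ, Symm ρ τ u (v - c • e) := by
    intro v hv
    by_contra hno
    push Not at hno
    refine hv (h.weak_of_strict_ray (h.strict_ray he fun s hs hZ => ?_))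
    rcases hs.eq_or_lt with rfl | hs
    · rw [zero_smul, add_zero] at hZ
      exact h.not_symm_of_strict he hZ
    · refine hno (-s⁻¹) ?_
      have := hZ.smul s⁻¹
      rw [smul_add, smul_smul, inv_mul_cancel₀ hs.ne', one_smul] at this
      rwa [neg_smul, sub_neg_eq_add, add_comm]
  by_cases h1 : Weak ρ τ u x
  · by_cases h2 : Weak ρ τ u (-x)
    · exact ⟨0, by simpa using symm_of_weak_of_weak_neg h1 h2⟩
    · obtain ⟨c, hc⟩ := key _ h2
      refine ⟨-c, ?_⟩
      convert hc.smul (-1) using 1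
      module
  · exact key x h1

/-- The unit normal `p` of the hyperplane of symmetry directions, on the side of `e`. -/
theorem exists_axis (h : Sol ρ τ T L u) {e : EuclideanSpace ℝ (Fin N)} (he : Strict ρ τ u e) :
    ∃ p : EuclideanSpace ℝ (Fin N), ‖p‖ = 1 ∧ ∀ x, 0 ≤ ⟪x, p⟫ → Weak ρ τ u x := by
  set V := h.symmSubmodule he with hV
  have hmem : ∀ v, v ∈ V ↔ Symm ρ τ u v := fun v => Iff.rfl
  have heV : e ∉ V := h.not_symm_of_strict he
  have hVtop : Vᗮ ≠ ⊥ := by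
    intro hbot
    rw [Submodule.orthogonal_eq_bot_iff] at hbot
    exact heV (hbot ▸ Submodule.mem_top)
  obtain ⟨q, hqV, hq0⟩ := Submodule.exists_mem_ne_zero_of_ne_bot hVtop
  have horth : ∀ v, Symm ρ τ u v → ⟪v, q⟫ = 0 := fun v hv => hqV v hv
  have heq : ⟪e, q⟫ ≠ 0 := by
    intro h0
    obtain ⟨c, hc⟩ := h.exists_symm_sub he q
    have := horth _ hc
    rw [inner_sub_left, real_inner_smul_left, h0, mul_zero, sub_zero] at this
    exact hq0 (inner_self_eq_zero.mp this)
  obtain ⟨p, hp1, hpe, hporth⟩ : ∃ p : EuclideanSpace ℝ (Fin N), ‖p‖ = 1 ∧ 0 < ⟪e, p⟫ ∧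
      ∀ v, Symm ρ τ u v → ⟪v, p⟫ = 0 := by
    have hk : ⟪e, q⟫ / (|⟪e, q⟫| * ‖q‖) * ⟪e, q⟫ = |⟪e, q⟫| / ‖q‖ := by
      have h1 := abs_pos.mpr heq
      have h2 := norm_pos_iff.mpr hq0
      rw [div_mul_eq_mul_div, div_eq_div_iff (by positivity) (by positivity)]
      rw [← abs_mul_abs_self ⟪e, q⟫]; ring
    refine ⟨(⟪e, q⟫ / (|⟪e, q⟫| * ‖q‖)) • q, ?_, ?_, fun v hv => ?_⟩
    · have h1 := abs_pos.mpr heq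
      have h2 := norm_pos_iff.mpr hq0
      rw [norm_smul, norm_div, norm_mul, norm_norm, Real.norm_eq_abs, Real.norm_eq_abs, abs_abs]
      field_simp
    · rw [real_inner_smul_right, hk]
      have h1 := abs_pos.mpr heq
      have h2 := norm_pos_iff.mpr hq0
      positivity
    · rw [real_inner_smul_right, horth v hv, mul_zero]
  refine ⟨p, hp1, fun x hx => ?_⟩
  obtain ⟨c, hc⟩ := h.exists_symm_sub he x
  have h1 := hporth _ hc
  rw [inner_sub_left, real_inner_smul_left, sub_eq_zero] at h1
  have hc0 : 0 ≤ c := by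
    rw [h1] at hx
    exact nonneg_of_mul_nonneg_left hx hpe
  rcases hc0.eq_or_lt with rfl | hc0
  · rw [zero_smul, sub_zero] at hc
    exact hc.weak
  · have h2 : Strict ρ τ u (e + c⁻¹ • (x - c • e)) := by
      refine h.strict_ray he (fun s _ hZ => heV ?_) _ (by positivity)
      have h3 : e + s • (x - c • e) ∈ V := hZ
      exact (Submodule.add_mem_iff_left V (V.smul_mem s ((hmem _).mpr hc))).mp h3
    have h3 := h2.weak.smul hc0
    convert h3 using 1
    rw [smul_add, smul_smul, mul_inv_cancel₀ hc0.ne']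
    module

/-- Two points `x ≠ y` of equal norm are exchanged by the reflection in direction `x - y`. -/
theorem foliated (h : Sol ρ τ T L u) {p : EuclideanSpace ℝ (Fin N)}
    (hp : ∀ x, 0 ≤ ⟪x, p⟫ → Weak ρ τ u x) (t : ℝ) (ht : 0 ≤ t) :
    FoliatedSchwarzOn (Cl ρ τ) (fun x => u x t) p := by
  intro x hx y hy hxy hin
  by_cases hxB : x ∈ Bd ρ τ
  · rcases eq_or_ne x y with rfl | hne
    · exact le_rfl
    have hw := hp (x - y) (by rw [inner_sub_left]; linarith)
    have hsq : ‖x - y‖ ^ 2 = 2 * ⟪x, x - y⟫ := by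
      rw [norm_sub_sq_real, inner_sub_right, real_inner_self_eq_norm_sq, ← hxy]; ring
    have hpos : 0 < ‖x - y‖ ^ 2 := by
      have := norm_pos_iff.mpr (sub_ne_zero.mpr hne); positivity
    have := hw t ht x ⟨hxB, by linarith⟩
    rw [dif, rf, ← hsq, div_self hpos.ne', one_smul, sub_sub_cancel] at this
    simpa using this
  · have hyB : y ∉ Bd ρ τ := by
      simpa only [Bd, mem_ofPred_eq, hxy] using hxB
    simp only [h.bdry x hx hxB t ht, h.bdry y hy hyB t ht, le_refl]

end Sol

/-! ### Radial domains -/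

theorem exists_Bd_of_isRadialDomain {B : Set (EuclideanSpace ℝ (Fin N))} (hB : IsRadialDomain B) :
    ∃ ρ τ : ℝ, ρ < τ ∧ 0 < τ ∧ (0 < ρ ∨ ρ = -1) ∧ B = Bd ρ τ ∧ closure B = Cl ρ τ := by
  rcases hB with ⟨R, hR, rfl⟩ | ⟨r, R, hr, hrR, rfl⟩
  · refine ⟨-1, R ^ 2, by nlinarith, by positivity, Or.inr rfl, ?_, ?_⟩
    · ext x
      rw [mem_ball_zero_iff]
      refine ⟨fun hx => ⟨by nlinarith [sq_nonneg ‖x‖], ?_⟩, fun hx => ?_⟩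
      · exact pow_lt_pow_left₀ hx (norm_nonneg _) two_ne_zero
      · exact lt_of_pow_lt_pow_left₀ 2 hR.le hx.2
    · rw [closure_ball _ hR.ne']
      ext x
      rw [mem_closedBall_zero_iff]
      refine ⟨fun hx => ⟨by nlinarith [sq_nonneg ‖x‖], ?_⟩, fun hx => ?_⟩
      · exact pow_le_pow_left₀ (norm_nonneg _) hx 2
      · exact le_of_sq_le_sq hx.2 hR.le
  · have hR : 0 < R := hr.trans hrR
    have hBd : {x : EuclideanSpace ℝ (Fin N) | r < ‖x‖ ∧ ‖x‖ < R} = Bd (r ^ 2) (R ^ 2) := by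
      ext x
      refine ⟨fun hx => ⟨?_, ?_⟩, fun hx => ⟨?_, ?_⟩⟩
      · exact pow_lt_pow_left₀ hx.1 hr.le two_ne_zero
      · exact pow_lt_pow_left₀ hx.2 (norm_nonneg _) two_ne_zero
      · exact lt_of_pow_lt_pow_left₀ 2 (norm_nonneg _) hx.1
      · exact lt_of_pow_lt_pow_left₀ 2 hR.le hx.2
    refine ⟨r ^ 2, R ^ 2, pow_lt_pow_left₀ hrR hr.le two_ne_zero, by positivity,
      Or.inl (by positivity), hBd, ?_⟩
    refine Subset.antisymm (hBd ▸ closure_minimal Bd_subset_Cl isClosed_Cl) fun x hx => ?_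
    have hx1 : r ≤ ‖x‖ := le_of_sq_le_sq hx.1 (norm_nonneg _)
    have hx2 : ‖x‖ ≤ R := le_of_sq_le_sq hx.2 hR.le
    have hxpos : 0 < ‖x‖ := hr.trans_le hx1
    -- `x` is the limit of the points with the same direction and norm `(1 - s) * ‖x‖ + s * m`,
    -- where `m` is the mean of the two radii
    have hc : Continuous fun s : ℝ => (((1 - s) * ‖x‖ + s * ((r + R) / 2)) / ‖x‖) • x := by fun_prop
    have hlim : Tendsto (fun s : ℝ => (((1 - s) * ‖x‖ + s * ((r + R) / 2)) / ‖x‖) • x)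
        (𝓝[>] 0) (𝓝 x) := by
      have := hc.tendsto 0
      simp only [sub_zero, one_mul, zero_mul, add_zero, div_self hxpos.ne', one_smul] at this
      exact this.mono_left nhdsWithin_le_nhds
    refine mem_closure_of_tendsto hlim ?_
    filter_upwards [Ioo_mem_nhdsGT (zero_lt_one (α := ℝ))] with s hs
    have h1 : 0 < (1 - s) * ‖x‖ + s * ((r + R) / 2) := by
      have := mul_pos (sub_pos.mpr hs.2) hxpos
      have := mul_pos hs.1 (show 0 < (r + R) / 2 by linarith)
      linarith
    have h2 : ‖(((1 - s) * ‖x‖ + s * ((r + R) / 2)) / ‖x‖) • x‖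
        = (1 - s) * ‖x‖ + s * ((r + R) / 2) := by
      rw [norm_smul, Real.norm_eq_abs, abs_of_pos (by positivity), div_mul_cancel₀ _ hxpos.ne']
    refine ⟨?_, ?_⟩ <;> rw [h2] <;> nlinarith [hs.1, hs.2]

theorem rf_eq_reflHyp {e : EuclideanSpace ℝ (Fin N)} (he : ‖e‖ = 1) (x : EuclideanSpace ℝ (Fin N)) :
    rf e x = reflHyp e x := by
  rw [rf, reflHyp, he]; norm_num

end

/-- Corollary `maincoro-simple`(ii) of the paper:
if `f` is `T`-periodic in time and `u` is a `T`-periodic classical solution of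
`u_t = Δu + f(t,|x|,u)` in `B × (0,∞)`, `u = 0` on `∂B × (0,∞)`, whose initial
profile `u₀ = u(·,0)` satisfies the reflection hypothesis (U1), then there is a
unit vector `p` such that `u(·,t)` is foliated Schwarz symmetric with respect
to `p` for every `t ≥ 0`. -/
theorem foliated_schwarz_symmetry_time_periodic
    (N : ℕ) (hN : 2 ≤ N)
    (B : Set (EuclideanSpace ℝ (Fin N))) (hB : IsRadialDomain B)
    (f : ℝ → ℝ → ℝ → ℝ)
    (Iset : Set ℝ) (hI : Iset = closure ((fun x : EuclideanSpace ℝ (Fin N) => ‖x‖) '' B))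
    -- (f1): continuity in (t,r) and local Lipschitz continuity in u, uniform in (t,r)
    (hf_cont : ∀ s : ℝ, ContinuousOn (fun p : ℝ × ℝ => f p.1 p.2 s) (Ici 0 ×ˢ Iset))
    (hf_lip : ∀ K > (0:ℝ), ∃ L > (0:ℝ), ∀ t ∈ Ici (0:ℝ), ∀ r ∈ Iset,
      ∀ u₁ ∈ Icc (-K) K, ∀ u₂ ∈ Icc (-K) K, |f t r u₁ - f t r u₂| ≤ L * |u₁ - u₂|)
    -- time periodicity of f
    (T : ℝ) (hT : 0 < T)
    (hf_per : ∀ t ∈ Ici (0:ℝ), ∀ r s : ℝ, f (t + T) r s = f t r s)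
    -- the solution and its derivatives
    (u : EuclideanSpace ℝ (Fin N) → ℝ → ℝ)
    (u₀ : EuclideanSpace ℝ (Fin N) → ℝ)
    (ut : EuclideanSpace ℝ (Fin N) → ℝ → ℝ)
    (Du : EuclideanSpace ℝ (Fin N) → ℝ → (EuclideanSpace ℝ (Fin N) →L[ℝ] ℝ))
    (D2u : EuclideanSpace ℝ (Fin N) → ℝ →
      (EuclideanSpace ℝ (Fin N) →L[ℝ] EuclideanSpace ℝ (Fin N) →L[ℝ] ℝ))
    -- u ∈ C(B̄ × [0,∞))
    (hu_cont : ContinuousOn (fun p : EuclideanSpace ℝ (Fin N) × ℝ => u p.1 p.2)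
      (closure B ×ˢ Ici 0))
    -- u ∈ C^{2,1}(B × (0,∞)): the derivatives exist and are continuous there
    (hut : ∀ x ∈ B, ∀ t ∈ Ioi (0:ℝ), HasDerivAt (fun s => u x s) (ut x t) t)
    (hDu : ∀ x ∈ B, ∀ t ∈ Ioi (0:ℝ), HasFDerivAt (fun y => u y t) (Du x t) x)
    (hD2u : ∀ x ∈ B, ∀ t ∈ Ioi (0:ℝ), HasFDerivAt (fun y => Du y t) (D2u x t) x)
    (hreg : ContinuousOn (fun p : EuclideanSpace ℝ (Fin N) × ℝ =>
      (ut p.1 p.2, Du p.1 p.2, D2u p.1 p.2)) (B ×ˢ Ioi 0))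
    -- the equation u_t = Δu + f(t,|x|,u) in B × (0,∞)
    (hPDE : ∀ x ∈ B, ∀ t ∈ Ioi (0:ℝ),
      ut x t = (∑ i, D2u x t (EuclideanSpace.single i 1) (EuclideanSpace.single i 1))
        + f t ‖x‖ (u x t))
    -- the boundary condition u = 0 on ∂B × (0,∞)
    (hbc : ∀ x ∈ frontier B, ∀ t ∈ Ioi (0:ℝ), u x t = 0)
    -- the initial profile u₀ = u(·,0)
    (hinit : ∀ x ∈ closure B, u x 0 = u₀ x)
    -- time periodicity of the solution
    (hu_per : ∀ x ∈ B, ∀ t ∈ Ici (0:ℝ), u x (t + T) = u x t)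
    -- (U1): reflection inequality for the initial profile
    (hU1 : ∃ e : EuclideanSpace ℝ (Fin N), ‖e‖ = 1 ∧
      (∀ x ∈ halfDom B e, u₀ (reflHyp e x) ≤ u₀ x) ∧
      (∃ x ∈ halfDom B e, u₀ (reflHyp e x) ≠ u₀ x)) :
    ∃ p : EuclideanSpace ℝ (Fin N), ‖p‖ = 1 ∧
      ∀ t ∈ Ici (0:ℝ), FoliatedSchwarzOn (closure B) (fun x => u x t) p := by
  obtain ⟨ρ, τ, hρτ, hτ, hρ, hBd, hCl⟩ := exists_Bd_of_isRadialDomain hB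
  have hBCl : ∀ x ∈ B, x ∈ closure B := fun x hx => subset_closure hx
  have hBo : IsOpen B := hBd ▸ isOpen_Bd
  -- the spatial sections of `u` are continuous, so periodicity extends to the closure
  have hsec : ∀ t, 0 ≤ t → ContinuousOn (fun x => u x t) (closure B) := fun t ht =>
    hu_cont.comp (f := fun x : EuclideanSpace ℝ (Fin N) => (x, t)) (by fun_prop)
      fun x hx => ⟨hx, ht⟩
  have hper : ∀ x ∈ closure B, ∀ t, 0 ≤ t → u x (t + T) = u x t := by
    intro x hx t ht
    have h1 : EqOn (fun x => u x (t + T)) (fun x => u x t) B := fun y hy => hu_per y hy t ht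
    exact h1.of_subset_closure (hsec _ (by linarith)) (hsec t ht) subset_closure Subset.rfl hx
  -- at time `0` the boundary condition follows by periodicity
  have hbdry : ∀ x ∈ closure B, x ∉ B → ∀ t, 0 ≤ t → u x t = 0 := by
    intro x hx hxB t ht
    rw [← hper x hx t ht]
    exact hbc x (by rw [hBo.frontier_eq]; exact ⟨hx, hxB⟩) _ (by simp only [mem_Ioi]; linarith)
  have hbound : ∃ K > (0 : ℝ), ∀ x ∈ closure B, ∀ t, 0 ≤ t → u x t ∈ Icc (-K) K := by
    have hcpt : IsCompact (closure B ×ˢ Icc 0 T) := by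
      rw [hCl]; exact isCompact_Cl.prod isCompact_Icc
    obtain ⟨C, hC⟩ := hcpt.exists_bound_of_continuousOn
      (hu_cont.mono (prod_mono Subset.rfl Icc_subset_Ici_self))
    refine ⟨max C 1, by positivity, fun x hx t ht => ?_⟩
    have hn : ∀ n : ℕ, ∀ s, 0 ≤ s → u x (s + n * T) = u x s := by
      intro n
      induction n with
      | zero => intro s _; simp
      | succ n ih =>
        intro s hs
        have h1 : s + ((n + 1 : ℕ) : ℝ) * T = (s + n * T) + T := by push_cast; ring
        rw [h1, hper x hx _ (by positivity), ih s hs]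
    have h1 : (⌊t / T⌋₊ : ℝ) * T ≤ t := by
      rw [← le_div_iff₀ hT]; exact Nat.floor_le (by positivity)
    have h2 : t < (⌊t / T⌋₊ + 1) * T := by
      rw [← div_lt_iff₀ hT]; exact Nat.lt_floor_add_one _
    have h3 := hn ⌊t / T⌋₊ (t - ⌊t / T⌋₊ * T) (by linarith)
    rw [sub_add_cancel] at h3
    have h4 := hC (x, t - ⌊t / T⌋₊ * T) ⟨hx, by linarith, by linarith⟩
    rw [Real.norm_eq_abs] at h4
    rw [h3]
    exact abs_le.mp (h4.trans (le_max_left C 1))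
  obtain ⟨K, hK, hKu⟩ := hbound
  obtain ⟨L, hL, hLip⟩ := hf_lip K hK
  have hnormI : ∀ x ∈ B, ‖x‖ ∈ Iset := fun x hx => hI ▸ subset_closure ⟨x, hx, rfl⟩
  have hSol : Sol ρ τ T L u :=
    { lt := hρτ
      pos := hτ
      inner_radius := hρ
      T_pos := hT
      L_pos := hL
      cont := hCl ▸ hu_cont
      per := hCl ▸ hper
      bdry := by rw [← hCl, ← hBd]; exact hbdry
      eqn := by
        intro v x hx t ht
        have hx' : rf v x ∈ B := by rw [hBd]; exact rf_mem_Bd.mpr hx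
        have hx : x ∈ B := by rw [hBd]; exact hx
        refine ⟨_, _, (hut x hx t ht).sub (hut _ hx' t ht),
          spaceData_sub_rf hBo (fun y hy => hDu y hy t ht) (fun y hy => hD2u y hy t ht) v x hx hx',
          ?_⟩
        have h1 := hLip t (le_of_lt ht) ‖x‖ (hnormI x hx) _ (hKu x (hBCl x hx) t (le_of_lt ht))
          _ (hKu _ (hBCl _ hx') t (le_of_lt ht))
        rw [hPDE x hx t ht, hPDE _ hx' t ht, norm_rf]
        refine le_trans (le_of_eq ?_) h1
        congr 1
        ring }
  obtain ⟨e, he1, hle, x₀, hx₀, hne⟩ := hU1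
  have hdif0 : ∀ x ∈ halfDom B e, dif u e x 0 = u₀ x - u₀ (reflHyp e x) := by
    intro x hx
    have hx' : rf e x ∈ closure B := by
      rw [hCl]; exact rf_mem_Cl.mpr (hCl ▸ hBCl x hx.1)
    rw [dif, hinit x (hBCl x hx.1), hinit _ hx', rf_eq_reflHyp he1]
  have hweak : Weak ρ τ u e := by
    refine hSol.nonneg_of_init fun x hx => ?_
    rw [← hBd] at hx
    rw [hdif0 x hx]
    linarith [hle x hx]
  have hstrict : Strict ρ τ u e := by
    have he0 : e ≠ 0 := by
      rintro rfl
      simp at he1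
    refine ⟨he0, hSol.pos_of_nonneg hweak (hBd ▸ hx₀) le_rfl ?_⟩
    rw [hdif0 x₀ hx₀]
    exact sub_pos.mpr (lt_of_le_of_ne (hle x₀ hx₀) hne)
  obtain ⟨p, hp1, hp⟩ := hSol.exists_axis hstrict
  refine ⟨p, hp1, fun t ht => ?_⟩
  rw [hCl]
  exact hSol.foliated hp t ht

end
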